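/- arXiv:1506.05679 — 4 statements merged into one kernel-verified Lean document; each statement's English description precedes it below -/
import Mathlib

section
/- Let Λ be a ℤ-lattice in ℂ² and let σ be a ℂ-linear automorphism of ℂ² of finite order with σ(Λ) = Λ, which is non-symplectic (det_ℂ σ ≠ 1) and such that ⋀²(σ|_Λ) has prime order p. Let T = {x ∈ ⋀²Λ : ⋀²(σ|_Λ)(x) = x} be the invariant lattice and r = rank T. Then there exists a generator vol of the rank-1 free ℤ-module ⋀⁴Λ such that the associated wedge form b on ⋀²Λ restricted to T has signature (1, r−1), i.e. the real extension of b|_T is congruent to the diagonal form diag(1, −1, …, −1). -/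
set_option synthInstance.maxHeartbeats 1000000
set_option maxHeartbeats 1000000

open ExteriorAlgebra Module Matrix

noncomputable section

/-- `Λ` is a `ℤ`-lattice in `ℂ²`: it is the `ℤ`-span of an `ℝ`-basis of `ℂ²`. -/
def IsComplexTorusLattice (Λ : Submodule ℤ (ℂ × ℂ)) : Prop :=
  ∃ b : Basis (Fin 4) ℝ (ℂ × ℂ), Λ = Submodule.span ℤ (Set.range b)

/-- The image of the `n`-th exterior power under the algebra morphism induced by a linear map
lands in the `n`-th exterior power. -/
lemma map_mem_exteriorPower {R M N : Type*} [CommRing R] [AddCommGroup M] [Module R M]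
    [AddCommGroup N] [Module R N] (f : M →ₗ[R] N) (n : ℕ) {x : ExteriorAlgebra R M}
    (hx : x ∈ ⋀[R]^n M) : ExteriorAlgebra.map f x ∈ ⋀[R]^n N := by
  rw [← ExteriorAlgebra.ιMulti_span_fixedDegree] at hx ⊢
  induction hx using Submodule.span_induction with
  | mem y hy =>
      obtain ⟨m, rfl⟩ := hy
      rw [ExteriorAlgebra.map_apply_ιMulti]
      exact Submodule.subset_span ⟨f ∘ m, rfl⟩
  | zero => simp
  | add a b _ _ ha hb => rw [map_add]; exact Submodule.add_mem _ ha hb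
  | smul r a _ ha => rw [_root_.map_smul]; exact Submodule.smul_mem _ r ha

/-- The `n`-th exterior power of a linear map. -/
def extPowMap {R M N : Type*} [CommRing R] [AddCommGroup M] [Module R M]
    [AddCommGroup N] [Module R N] (n : ℕ) (f : M →ₗ[R] N) : ⋀[R]^n M →ₗ[R] ⋀[R]^n N :=
  LinearMap.restrict (ExteriorAlgebra.map f).toLinearMap
    (fun _ hx => map_mem_exteriorPower f n hx)

/-- The automorphism `σ` of `ℂ²` maps the lattice `Λ` onto itself. -/
def PreservesLattice (σ : (ℂ × ℂ) ≃ₗ[ℂ] (ℂ × ℂ)) (Λ : Submodule ℤ (ℂ × ℂ)) : Prop :=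
  Λ.map ((σ.restrictScalars ℤ : (ℂ × ℂ) ≃ₗ[ℤ] (ℂ × ℂ)) : (ℂ × ℂ) →ₗ[ℤ] (ℂ × ℂ)) = Λ

/-- The restriction `σ|_Λ` of `σ` to the lattice `Λ`, as a `ℤ`-linear automorphism. -/
def latRestrict (σ : (ℂ × ℂ) ≃ₗ[ℂ] (ℂ × ℂ)) (Λ : Submodule ℤ (ℂ × ℂ))
    (h : PreservesLattice σ Λ) : ↥Λ ≃ₗ[ℤ] ↥Λ :=
  (σ.restrictScalars ℤ).ofSubmodules Λ Λ h

/-- The induced endomorphism `⋀²(σ|_Λ)` of `⋀²Λ`. -/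
def extSq (σ : (ℂ × ℂ) ≃ₗ[ℂ] (ℂ × ℂ)) (Λ : Submodule ℤ (ℂ × ℂ))
    (h : PreservesLattice σ Λ) : Module.End ℤ (⋀[ℤ]^2 ↥Λ) :=
  extPowMap 2 (latRestrict σ Λ h).toLinearMap

/-- The invariant lattice `T = {x ∈ ⋀²Λ : ⋀²(σ|_Λ)(x) = x}`. -/
def invLat (σ : (ℂ × ℂ) ≃ₗ[ℂ] (ℂ × ℂ)) (Λ : Submodule ℤ (ℂ × ℂ))
    (h : PreservesLattice σ Λ) : Submodule ℤ (⋀[ℤ]^2 ↥Λ) :=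
  LinearMap.ker (extSq σ Λ h - LinearMap.id)

/-- `b` is the wedge form on `⋀²Λ` determined by the generator `vol` of `⋀⁴Λ`, i.e.
`x ∧ y = b(x,y) • vol`. -/
def IsWedgeForm (Λ : Submodule ℤ (ℂ × ℂ)) (vol : ⋀[ℤ]^4 ↥Λ)
    (b : ⋀[ℤ]^2 ↥Λ →ₗ[ℤ] ⋀[ℤ]^2 ↥Λ →ₗ[ℤ] ℤ) : Prop :=
  ∀ x y : ⋀[ℤ]^2 ↥Λ, (x : ExteriorAlgebra ℤ ↥Λ) * (y : ExteriorAlgebra ℤ ↥Λ)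
    = b x y • (vol : ExteriorAlgebra ℤ ↥Λ)

/-- The restriction of the form `b` to the submodule `T` admits Gram matrix `G`
in some basis; i.e. `(T, b|_T)` is isometric to the lattice with Gram matrix `G`. -/
def HasGramMatrix {M : Type*} [AddCommGroup M] [Module ℤ M] (b : M →ₗ[ℤ] M →ₗ[ℤ] ℤ)
    (T : Submodule ℤ M) {n : ℕ} (G : Matrix (Fin n) (Fin n) ℤ) : Prop :=
  ∃ v : Basis (Fin n) ℤ ↥T, ∀ i j, b (v i : M) (v j : M) = G i j

/-!
Over `ℝ`, the exterior square of `ℂ²` is `ℂ × {Hermitian 2 × 2 matrices}` through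
`u ∧ v ↦ (det (u, v), (v u* - u v*) / 2i)`. With respect to the complex orientation its wedge form
is `Re (conj D * D') / 2 + (tr H tr H' - tr H H')`; the second summand polarizes `2 det H` and so is
Lorentzian. A complex matrix `A` acts by `(D, H) ↦ (det A * D, A H A*)`. When `det A ≠ 1`, invariant
bivectors have `D = 0`, so the invariant lattice embeds in the Lorentzian space of Hermitian
matrices. A subspace of a Lorentzian space is Lorentzian as soon as it contains a positive vector,
and averaging the identity matrix over the finite group generated by `⋀² A` yields a positive
definite, hence positive, invariant one.
-/

/-! ### Lorentzian forms -/

/-- A real symmetric bilinear form is Lorentzian if it is positive on some vector and negative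
definite on the orthogonal complement of every vector on which it is positive. On a space of finite
dimension `r` this says that the signature is `(1, r - 1)`. -/
structure IsLorentzian {E : Type*} [AddCommGroup E] [Module ℝ E]
    (Q : LinearMap.BilinForm ℝ E) : Prop where
  isSymm : Q.IsSymm
  exists_pos : ∃ ω, 0 < Q ω ω
  neg_of_orthogonal : ∀ ⦃ω x⦄, 0 < Q ω ω → Q ω x = 0 → x ≠ 0 → Q x x < 0

namespace IsLorentzian

variable {E F : Type*} [AddCommGroup E] [Module ℝ E] [AddCommGroup F] [Module ℝ F]
  {Q : LinearMap.BilinForm ℝ E}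

lemma of_injective {Q' : LinearMap.BilinForm ℝ F} (hQ : IsLorentzian Q) {f : F →ₗ[ℝ] E}
    (hf : Function.Injective f) {c : ℝ} (hc : 0 < c) (h : ∀ x y, Q (f x) (f y) = c * Q' x y)
    (hpos : ∃ ω, 0 < Q (f ω) (f ω)) : IsLorentzian Q' where
  isSymm := ⟨fun x y => mul_left_cancel₀ hc.ne' <| by
    simpa only [h] using hQ.isSymm.eq (f x) (f y)⟩
  exists_pos := hpos.imp fun ω hω => pos_of_mul_pos_right (h ω ω ▸ hω) hc.le
  neg_of_orthogonal ω x hω hx hx0 := by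
    have hfx : Q (f x) (f x) < 0 :=
      hQ.neg_of_orthogonal (by rw [h]; positivity) (by rw [h, hx, mul_zero])
        ((map_ne_zero_iff f hf).2 hx0)
    exact neg_of_mul_neg_right (h x x ▸ hfx) hc.le

lemma exists_basis_pos {ι : Type*} [Finite ι] (hQ : IsLorentzian Q) {v : Basis ι ℝ E}
    (hv : Q.IsOrthoᵢ v) : ∃ i, 0 < Q (v i) (v i) := by
  cases nonempty_fintype ι
  classical
  obtain ⟨ω, hω⟩ := hQ.exists_pos
  have hsum : Q ω ω = ∑ i, v.repr ω i * (v.repr ω i * Q (v i) (v i)) := by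
    rw [← LinearMap.BilinForm.sum_repr_mul_repr_mul v ω ω, Finsupp.sum_fintype _ _ (by simp)]
    refine Finset.sum_congr rfl fun i _ => ?_
    rw [Finsupp.sum_fintype _ _ (by simp), Finset.sum_eq_single i _ (by simp)]
    · simp only [smul_eq_mul]
    · intro j _ hji
      simp [show Q (v i) (v j) = 0 from hv hji.symm]
  obtain ⟨i, -, hi⟩ := Finset.exists_lt_of_sum_lt (s := .univ) (f := fun _ => (0 : ℝ))
    (by simpa [hsum] using hω)
  refine ⟨i, ?_⟩
  rw [← mul_assoc] at hi
  exact pos_of_mul_pos_right hi (mul_self_nonneg _)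

lemma exists_isOrthoᵢ_basis {r : ℕ} [Module.Finite ℝ E] (hQ : IsLorentzian Q)
    (hr : finrank ℝ E = r) :
    ∃ v : Basis (Fin r) ℝ E, Q.IsOrthoᵢ v ∧
      ∀ i : Fin r, if (i : ℕ) = 0 then 0 < Q (v i) (v i) else Q (v i) (v i) < 0 := by
  subst hr
  obtain ⟨v, hv⟩ :=
    LinearMap.BilinForm.exists_orthogonal_basis (LinearMap.BilinForm.isSymm_iff.1 hQ.isSymm)
  obtain ⟨i₀, hi₀⟩ := hQ.exists_basis_pos hv
  let τ := Equiv.swap i₀ ⟨0, i₀.pos⟩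
  refine ⟨v.reindex τ, fun i j hij => ?_, fun i => ?_⟩
  · simpa only [Function.onFun, Basis.reindex_apply] using hv (τ.symm.injective.ne hij)
  · have hτ : i.1 = 0 ↔ i₀ = τ.symm i := by
      rw [Equiv.eq_symm_apply, Equiv.swap_apply_left, Fin.ext_iff, eq_comm]
    simp only [Basis.reindex_apply]
    split_ifs with hi
    · rwa [← hτ.1 hi]
    · exact hQ.neg_of_orthogonal hi₀ (hv (mt hτ.2 hi)) (v.ne_zero _)

lemma exists_orthonormal_basis {r : ℕ} [Module.Finite ℝ E] (hQ : IsLorentzian Q)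
    (hr : finrank ℝ E = r) :
    ∃ e : Basis (Fin r) ℝ E,
      LinearMap.BilinForm.toMatrix e Q =
        diagonal fun i : Fin r => if (i : ℕ) = 0 then 1 else -1 := by
  obtain ⟨v, hv, hsign⟩ := hQ.exists_isOrthoᵢ_basis hr
  have hne (i) : Q (v i) (v i) ≠ 0 := by
    have := hsign i
    split_ifs at this
    exacts [this.ne', this.ne]
  have hsqrt (i) : √|Q (v i) (v i)| ≠ 0 := (Real.sqrt_pos.2 (abs_pos.2 (hne i))).ne'
  refine ⟨v.isUnitSMul fun i => (inv_ne_zero (hsqrt i)).isUnit, ?_⟩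
  ext i j
  simp only [LinearMap.BilinForm.toMatrix_apply, Basis.isUnitSMul_apply, map_smul,
    LinearMap.smul_apply, smul_eq_mul, diagonal_apply]
  split_ifs with hij hi
  · subst hij
    have hpos : 0 < Q (v i) (v i) := by simpa only [hi, if_true] using hsign i
    have := Real.mul_self_sqrt hpos.le
    have := hsqrt i
    rw [abs_of_pos hpos] at *
    field_simp
    linarith
  · subst hij
    have hneg : Q (v i) (v i) < 0 := by simpa only [hi, if_false] using hsign i
    have := Real.mul_self_sqrt (neg_nonneg.2 hneg.le)
    have := hsqrt i
    rw [abs_of_neg hneg] at *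
    field_simp
    linarith
  · rw [show Q (v i) (v j) = 0 from hv hij, mul_zero, mul_zero]

lemma exists_congruent_diagonal {r : ℕ} (hQ : IsLorentzian Q) (w : Basis (Fin r) ℝ E) :
    ∃ P : Matrix (Fin r) (Fin r) ℝ, IsUnit P.det ∧
      Pᵀ * LinearMap.BilinForm.toMatrix w Q * P =
        diagonal fun i : Fin r => if (i : ℕ) = 0 then 1 else -1 := by
  have : Module.Finite ℝ E := .of_basis w
  obtain ⟨e, he⟩ := hQ.exists_orthonormal_basis
    ((finrank_eq_card_basis w).trans (Fintype.card_fin r))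
  refine ⟨w.toMatrix e, w.isUnit_det e, ?_⟩
  rw [LinearMap.BilinForm.toMatrix_mul_basis_toMatrix, he]

lemma exists_congruent_gram {T : Type*} [AddCommGroup T]
    {b : LinearMap.BilinForm ℤ T} (hb : IsLorentzian (b.baseChange ℝ)) {r : ℕ}
    (v : Basis (Fin r) ℤ T) :
    ∃ P : Matrix (Fin r) (Fin r) ℝ, IsUnit P.det ∧
      Pᵀ * of (fun i j => (b (v i) (v j) : ℝ)) * P =
        diagonal fun i : Fin r => if (i : ℕ) = 0 then 1 else -1 := by
  have hgram : LinearMap.BilinForm.toMatrix (v.baseChange ℝ) (b.baseChange ℝ) =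
      of fun i j => (b (v i) (v j) : ℝ) := by
    ext i j
    simp [LinearMap.BilinForm.toMatrix_apply]
  exact hgram ▸ hb.exists_congruent_diagonal (v.baseChange ℝ)

end IsLorentzian

/-! ### The exterior square of `ℂ²` over `ℝ` -/

section SelfAdjoint

variable (V : Type*) [AddCommGroup V] [Module ℂ V] [StarAddMonoid V] [StarModule ℂ V]
  [Module.Finite ℂ V]

instance finite_selfAdjoint : Module.Finite ℝ (selfAdjoint V) :=
  .of_injective (selfAdjoint.submodule ℝ V).subtype Subtype.val_injective

lemma finrank_selfAdjoint : finrank ℝ (selfAdjoint V) = finrank ℂ V := by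
  have hker : finrank ℝ (LinearMap.ker (imaginaryPart (A := V))) = finrank ℝ (selfAdjoint V) := by
    rw [ker_imaginaryPart]
    rfl
  have hrange : finrank ℝ (LinearMap.range (imaginaryPart (A := V))) =
      finrank ℝ (selfAdjoint V) := by
    rw [LinearMap.range_eq_top.2 imaginaryPart_surjective, finrank_top]
  have := LinearMap.finrank_range_add_finrank_ker (imaginaryPart (A := V))
  rw [hker, hrange, finrank_real_of_complex] at this
  lia

end SelfAdjoint

section HodgeSpace
open scoped ComplexStarModule ComplexOrder

/-- The polarization `(H, K) ↦ tr H tr K - tr HK` of twice the determinant, on the real vector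
space of Hermitian `2 × 2` matrices. -/
def detPolar : LinearMap.BilinForm ℝ (selfAdjoint (Matrix (Fin 2) (Fin 2) ℂ)) :=
  LinearMap.mk₂ ℝ (fun H K => (trace H.1 * trace K.1 - trace (H.1 * K.1)).re)
    (fun H H' K => by
      simp only [AddSubgroup.coe_add, add_mul, trace_add, Complex.sub_re, Complex.add_re]; ring)
    (fun c H K => by simp [trace_smul, mul_sub, mul_assoc])
    (fun H K K' => by
      simp only [AddSubgroup.coe_add, mul_add, trace_add, Complex.sub_re, Complex.add_re]; ring)
    (fun c H K => by simp [trace_smul, mul_sub, mul_left_comm])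

lemma detPolar_apply (H K : selfAdjoint (Matrix (Fin 2) (Fin 2) ℂ)) :
    detPolar H K = (H.1 0 0).re * (K.1 1 1).re + (H.1 1 1).re * (K.1 0 0).re
      - 2 * ((H.1 0 1).re * (K.1 0 1).re + (H.1 0 1).im * (K.1 0 1).im) := by
  have hH : H.1.IsHermitian := H.2
  have hK : K.1.IsHermitian := K.2
  have hH0 : (H.1 0 0).im = 0 := Complex.conj_eq_iff_im.1 (hH.apply 0 0)
  have hH1 : (H.1 1 1).im = 0 := Complex.conj_eq_iff_im.1 (hH.apply 1 1)
  simp only [detPolar, LinearMap.mk₂_apply, trace_fin_two, Matrix.mul_apply, Fin.sum_univ_two,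
    ← hH.apply 1 0, ← hK.apply 1 0, RCLike.star_def, Complex.sub_re, Complex.mul_re,
    Complex.add_re, Complex.add_im, Complex.conj_re, Complex.conj_im, hH0, hH1]
  ring

lemma detPolar_self (H : selfAdjoint (Matrix (Fin 2) (Fin 2) ℂ)) :
    detPolar H H = 2 * (det H.1).re := by
  simp only [detPolar, LinearMap.mk₂_apply, trace_fin_two, Matrix.mul_apply, Fin.sum_univ_two,
    det_fin_two]
  rw [← Complex.re_ofReal_mul]
  congr 1
  push_cast
  ring

lemma selfAdjoint_eq_zero_iff (H : selfAdjoint (Matrix (Fin 2) (Fin 2) ℂ)) :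
    H = 0 ↔ (H.1 0 0).re = 0 ∧ (H.1 1 1).re = 0 ∧ H.1 0 1 = 0 := by
  have hH : H.1.IsHermitian := H.2
  refine ⟨fun h => by simp [h], fun ⟨h0, h1, h01⟩ => Subtype.ext ?_⟩
  rw [Matrix.eta_fin_two H.1, ← hH.coe_re_apply_self 0, ← hH.coe_re_apply_self 1, ← hH.apply 1 0,
    h01]
  simp [h0, h1, Matrix.eta_fin_two (0 : Matrix (Fin 2) (Fin 2) ℂ)]

lemma isLorentzian_detPolar : IsLorentzian detPolar where
  isSymm := ⟨fun H K => by rw [detPolar_apply, detPolar_apply]; ring⟩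
  exists_pos := ⟨1, by simp [detPolar_self]⟩
  neg_of_orthogonal H K hH hHK hK := by
    rw [detPolar_apply] at hH hHK ⊢
    rw [Ne, selfAdjoint_eq_zero_iff, Complex.ext_iff] at hK
    simp only [Complex.zero_re, Complex.zero_im] at hK
    generalize (H.1 0 0).re = a, (H.1 1 1).re = d, (H.1 0 1).re = x, (H.1 0 1).im = y at *
    generalize (K.1 0 0).re = a', (K.1 1 1).re = d', (K.1 0 1).re = x', (K.1 0 1).im = y' at *
    have ha : a ≠ 0 := by
      rintro rfl
      nlinarith [sq_nonneg x, sq_nonneg y]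
    have key : a ^ 2 * (a' * d' + d' * a' - 2 * (x' * x' + y' * y')) =
        -(2 * ((a * x' - a' * x) ^ 2 + (a * y' - a' * y) ^ 2) +
          a' ^ 2 * (a * d + d * a - 2 * (x * x + y * y))) := by
      linear_combination 2 * a * a' * hHK
    refine neg_of_mul_neg_right (key.trans_lt (neg_neg_of_pos ?_)) (sq_nonneg a)
    rcases eq_or_ne a' 0 with rfl | ha'
    · have : x' ≠ 0 ∨ y' ≠ 0 := by
        by_contra! h
        obtain ⟨rfl, rfl⟩ := h
        exact hK ⟨rfl, by simpa [ha] using hHK, rfl, rfl⟩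
      rcases this with h | h <;> simp only [zero_mul, sub_zero] <;> positivity
    · positivity

lemma detPolar_self_pos_of_posDef {H : selfAdjoint (Matrix (Fin 2) (Fin 2) ℂ)}
    (hH : H.1.PosDef) : 0 < detPolar H H := by
  rw [detPolar_self]
  have := (Complex.lt_def.1 hH.det_pos).1
  simpa using this

/-- A model of `⋀²_ℝ ℂ²`, with `ℂ` dual to the holomorphic `2`-form and the Hermitian matrices dual
to the real `(1, 1)`-forms. -/
abbrev HodgeSpace : Type := ℂ × selfAdjoint (Matrix (Fin 2) (Fin 2) ℂ)

/-- The wedge product `ℂ² × ℂ² → ⋀²_ℝ ℂ²` in the model `HodgeSpace`: the holomorphic determinant of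
`u` and `v`, and the Hermitian matrix `(v u* - u v*) / 2i`. -/
def hodgeWedge : (Fin 2 → ℂ) →ₗ[ℝ] (Fin 2 → ℂ) →ₗ[ℝ] HodgeSpace :=
  LinearMap.mk₂ ℝ (fun u v => (u 0 * v 1 - u 1 * v 0, ℑ (vecMulVec v (star u))))
    (fun u u' v => by
      simp only [star_add, vecMulVec_add, map_add, Pi.add_apply, Prod.mk_add_mk]
      ring_nf)
    (fun c u v => by
      simp only [star_smul, vecMulVec_smul, map_smul, Pi.smul_apply, Prod.smul_mk, star_trivial,
        smul_mul_assoc, smul_sub])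
    (fun u v v' => by
      simp only [add_vecMulVec, map_add, Pi.add_apply, Prod.mk_add_mk]
      ring_nf)
    (fun c u v => by
      simp only [smul_vecMulVec, map_smul, Pi.smul_apply, Prod.smul_mk,
        mul_smul_comm, smul_sub])

lemma fst_hodgeWedge (u v : Fin 2 → ℂ) : (hodgeWedge u v).1 = u 0 * v 1 - u 1 * v 0 := rfl

lemma coe_snd_hodgeWedge_apply (u v : Fin 2 → ℂ) (i j : Fin 2) :
    (hodgeWedge u v).2.1 i j =
      -Complex.I * (2⁻¹ * (v i * star (u j) - u i * star (v j))) := by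
  simp [hodgeWedge, imaginaryPart_apply_coe, vecMulVec_apply, mul_comm]

lemma hodgeWedge_self (u : Fin 2 → ℂ) : hodgeWedge u u = 0 := by
  refine Prod.ext (by simp [hodgeWedge, mul_comm]) ?_
  exact (posSemidef_vecMulVec_self_star u).isHermitian.isSelfAdjoint.imaginaryPart

/-- The wedge form of `⋀²_ℝ ℂ²` in the model `HodgeSpace`, with respect to `orientationForm`; its
signature `(3, 3)` splits as `(2, 0) + (1, 3)`. -/
def hodgeForm : LinearMap.BilinForm ℝ HodgeSpace :=
  (2⁻¹ : ℝ) • (innerₗ ℂ).compl₁₂ (LinearMap.fst ℝ _ _) (LinearMap.fst ℝ _ _) +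
    detPolar.compl₁₂ (LinearMap.snd ℝ _ _) (LinearMap.snd ℝ _ _)

lemma hodgeForm_apply (x y : HodgeSpace) :
    hodgeForm x y = 2⁻¹ * inner ℝ x.1 y.1 + detPolar x.2 y.2 := rfl

/-- The determinant of four vectors of `ℂ²` in the real coordinates `Re z₀, Im z₀, Re z₁, Im z₁`:
the volume form of the complex orientation. -/
def orientationForm : (Fin 2 → ℂ) [⋀^Fin 4]→ₗ[ℝ] ℝ :=
  detRowAlternating.compLinearMap <| LinearMap.pi
    ![Complex.reLm ∘ₗ LinearMap.proj 0, Complex.imLm ∘ₗ LinearMap.proj 0,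
      Complex.reLm ∘ₗ LinearMap.proj 1, Complex.imLm ∘ₗ LinearMap.proj 1]

lemma orientationForm_apply (u : Fin 4 → Fin 2 → ℂ) :
    orientationForm u =
      det (of fun i => ![(u i 0).re, (u i 0).im, (u i 1).re, (u i 1).im]) := by
  rw [orientationForm, AlternatingMap.compLinearMap_apply]
  change det _ = _
  congr 1
  ext i j
  fin_cases j <;> rfl

lemma orientationForm_basis_ne_zero (b : Basis (Fin 4) ℝ (Fin 2 → ℂ)) :
    orientationForm b ≠ 0 := by
  refine (AlternatingMap.map_basis_ne_zero_iff b _).2 fun h => ?_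
  have h1 : orientationForm ![![1, 0], ![Complex.I, 0], ![0, 1], ![0, Complex.I]] = 1 := by
    refine (orientationForm_apply _).trans ((congrArg det ?_).trans (det_one (n := Fin 4)))
    ext i j
    fin_cases i <;> fin_cases j <;> simp
  simp [h] at h1

lemma det_fin_four_laplace {R : Type*} [CommRing R] (M : Matrix (Fin 4) (Fin 4) R) :
    M.det =
      (M 0 0 * M 1 1 - M 0 1 * M 1 0) * (M 2 2 * M 3 3 - M 2 3 * M 3 2)
        - (M 0 0 * M 1 2 - M 0 2 * M 1 0) * (M 2 1 * M 3 3 - M 2 3 * M 3 1)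
        + (M 0 0 * M 1 3 - M 0 3 * M 1 0) * (M 2 1 * M 3 2 - M 2 2 * M 3 1)
        + (M 0 1 * M 1 2 - M 0 2 * M 1 1) * (M 2 0 * M 3 3 - M 2 3 * M 3 0)
        - (M 0 1 * M 1 3 - M 0 3 * M 1 1) * (M 2 0 * M 3 2 - M 2 2 * M 3 0)
        + (M 0 2 * M 1 3 - M 0 3 * M 1 2) * (M 2 0 * M 3 1 - M 2 1 * M 3 0) := by
  simp [det_succ_row_zero, Fin.sum_univ_succ, Fin.succAbove]
  ring

lemma hodgeForm_hodgeWedge (u : Fin 4 → Fin 2 → ℂ) :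
    hodgeForm (hodgeWedge (u 0) (u 1)) (hodgeWedge (u 2) (u 3)) = orientationForm u := by
  rw [orientationForm_apply, det_fin_four_laplace, hodgeForm_apply, detPolar_apply]
  simp only [fst_hodgeWedge, coe_snd_hodgeWedge_apply, Complex.inner, of_apply, cons_val,
    Complex.star_def, Complex.mul_re, Complex.mul_im, Complex.sub_re, Complex.sub_im,
    Complex.neg_re, Complex.neg_im, Complex.I_re, Complex.I_im, Complex.conj_re, Complex.conj_im,
    Complex.inv_re, Complex.inv_im, Complex.normSq_ofNat, Complex.re_ofNat, Complex.im_ofNat]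
  ring

lemma fst_hodgeWedge_I_smul (u : Fin 2 → ℂ) : (hodgeWedge u (Complex.I • u)).1 = 0 := by
  rw [fst_hodgeWedge, Pi.smul_apply, Pi.smul_apply, smul_eq_mul, smul_eq_mul]
  ring

lemma coe_snd_hodgeWedge_I_smul (u : Fin 2 → ℂ) :
    (hodgeWedge u (Complex.I • u)).2.1 = vecMulVec u (star u) := by
  ext i j
  rw [coe_snd_hodgeWedge_apply, vecMulVec_apply]
  simp only [Pi.smul_apply, Pi.star_apply, smul_eq_mul, star_mul', Complex.star_def,
    Complex.conj_I]
  linear_combination -(u i * starRingEnd ℂ (u j)) * Complex.I_mul_I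

lemma span_hodgeWedge_eq_top :
    Submodule.span ℝ {x | ∃ u v, hodgeWedge u v = x} = ⊤ := by
  set S := Submodule.span ℝ {x | ∃ u v, hodgeWedge u v = x}
  have hmem (u v) : hodgeWedge u v ∈ S := Submodule.subset_span ⟨u, v, rfl⟩
  have hHerm (H : selfAdjoint (Matrix (Fin 2) (Fin 2) ℂ)) : ((0, H) : HodgeSpace) ∈ S := by
    have hH : H.1.IsHermitian := H.2
    have hdecomp : ((0, H) : HodgeSpace) =
        ((H.1 0 0).re - Complex.normSq (H.1 0 1)) • hodgeWedge ![1, 0] (Complex.I • ![1, 0]) +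
          ((H.1 1 1).re - 1) • hodgeWedge ![0, 1] (Complex.I • ![0, 1]) +
          hodgeWedge ![H.1 0 1, 1] (Complex.I • ![H.1 0 1, 1]) := by
      refine Prod.ext (by simp only [Prod.fst_add, Prod.smul_fst, fst_hodgeWedge_I_smul,
        smul_zero, add_zero]) (Subtype.ext ?_)
      ext i j
      simp only [Prod.snd_add, Prod.smul_snd, AddSubgroup.coe_add, selfAdjoint.val_smul,
        coe_snd_hodgeWedge_I_smul, Matrix.add_apply, Matrix.smul_apply, vecMulVec_apply]
      fin_cases i <;> fin_cases j
      · simpa [Complex.mul_conj] using (hH.coe_re_apply_self 0).symm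
      · simp
      · simpa using (hH.apply 1 0).symm
      · simpa using (hH.coe_re_apply_self 1).symm
    rw [hdecomp]
    exact S.add_mem (S.add_mem (S.smul_mem _ (hmem _ _)) (S.smul_mem _ (hmem _ _))) (hmem _ _)
  refine Submodule.eq_top_iff'.2 fun ⟨D, H⟩ => ?_
  have hD : (hodgeWedge ![1, 0] ![0, D]).1 = D := by simp [hodgeWedge]
  have := S.add_mem (hmem ![1, 0] ![0, D]) (hHerm (H - (hodgeWedge ![1, 0] ![0, D]).2))
  convert this using 1
  exact Prod.ext (by simp [hD]) (by simp)

/-- The action of `⋀² A` on `⋀²_ℝ ℂ²` in the model `HodgeSpace`. -/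
def hodgeAction : Matrix (Fin 2) (Fin 2) ℂ →* Module.End ℝ HodgeSpace where
  toFun A :=
    (LinearMap.mulLeft ℝ A.det).prodMap
      { toFun H := ⟨A * H.1 * star A, H.2.conjugate A⟩
        map_add' _ _ := Subtype.ext <| by simp [mul_add, add_mul]
        map_smul' _ _ := Subtype.ext <| by simp }
  map_one' := LinearMap.ext fun _ => Prod.ext (by simp) (Subtype.ext <| by simp)
  map_mul' A B := LinearMap.ext fun _ =>
    Prod.ext (by simp [mul_assoc]) (Subtype.ext <| by simp [mul_assoc])

lemma fst_hodgeAction (A : Matrix (Fin 2) (Fin 2) ℂ) (x : HodgeSpace) :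
    (hodgeAction A x).1 = A.det * x.1 := rfl

lemma hodgeAction_hodgeWedge (A : Matrix (Fin 2) (Fin 2) ℂ) (u v : Fin 2 → ℂ) :
    hodgeAction A (hodgeWedge u v) = hodgeWedge (A *ᵥ u) (A *ᵥ v) := by
  have hconj (B : Matrix (Fin 2) (Fin 2) ℂ) :
      A * (ℑ B).1 * star A = (ℑ (A * B * star A)).1 := by
    simp only [imaginaryPart_apply_coe, star_mul, star_star, mul_smul_comm, smul_mul_assoc,
      mul_sub, sub_mul, mul_assoc]
  have hvec : A * vecMulVec v (star u) * star A = vecMulVec (A *ᵥ v) (star (A *ᵥ u)) := by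
    rw [mul_vecMulVec, vecMulVec_mul, star_mulVec, star_eq_conjTranspose]
  refine Prod.ext ?_ (Subtype.ext ((hconj _).trans (by rw [hvec]; rfl)))
  rw [fst_hodgeAction, fst_hodgeWedge, fst_hodgeWedge, det_fin_two, mulVec_fin_two, mulVec_fin_two]
  simp only [cons_val_zero, cons_val_one]
  ring

lemma finrank_hodgeSpace : finrank ℝ HodgeSpace = 6 := by
  rw [finrank_prod, Complex.finrank_real_complex, finrank_selfAdjoint, finrank_matrix]
  simp

lemma detPolar_sum_hodgeAction_pos (A : Matrix (Fin 2) (Fin 2) ℂ) {n : ℕ} (hn : 0 < n) :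
    0 < detPolar (∑ k ∈ Finset.range n, (hodgeAction A ^ k) (0, 1)).2
      (∑ k ∈ Finset.range n, (hodgeAction A ^ k) (0, 1)).2 := by
  obtain ⟨n, rfl⟩ := Nat.exists_eq_succ_of_ne_zero hn.ne'
  refine detPolar_self_pos_of_posDef ?_
  have hcoe (k : ℕ) : ((hodgeAction A ^ k) (0, 1)).2.1 = A ^ k * (A ^ k)ᴴ := by
    rw [← map_pow]
    simp [hodgeAction, star_eq_conjTranspose]
  simp only [Prod.snd_sum, AddSubgroup.val_finsetSum, hcoe]
  rw [Finset.sum_range_succ', pow_zero, conjTranspose_one, mul_one]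
  exact PosDef.posSemidef_add (posSemidef_sum _ fun k _ => posSemidef_self_mul_conjTranspose _)
    .one

end HodgeSpace

/-! ### Exterior powers and the wedge pairing -/

section ExteriorPower

variable {R M N : Type*} [CommRing R] [AddCommGroup M] [Module R M] [AddCommGroup N] [Module R N]

lemma extPowMap_eq_map (n : ℕ) (f : M →ₗ[R] N) : extPowMap n f = exteriorPower.map n f :=
  exteriorPower.linearMap_ext <| AlternatingMap.ext fun v => Subtype.ext <|
    (ExteriorAlgebra.map_apply_ιMulti f v).trans
      (congrArg Subtype.val (exteriorPower.map_apply_ιMulti f v)).symm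

lemma alternatingMap_eq_det_smul {n : ℕ} (e : Basis (Fin n) R M) (g : M [⋀^Fin n]→ₗ[R] N)
    (v : Fin n → M) : g v = e.det v • g e := by
  have h : g = (LinearMap.toSpanSingleton R N (g e)).compAlternatingMap e.det := by
    refine Basis.ext_alternating e fun τ hτ => ?_
    let τ' := Equiv.ofBijective τ (Finite.injective_iff_bijective.1 hτ)
    change g (e ∘ τ') = e.det (e ∘ τ') • g e
    rw [AlternatingMap.map_perm, AlternatingMap.map_perm, e.det_self, smul_assoc, one_smul]
  exact DFunLike.congr_fun h v

/-- The coordinate on the top exterior power with respect to the generator `e₀ ∧ ⋯ ∧ eₙ₋₁`. -/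
def volCoord {n : ℕ} (e : Basis (Fin n) R M) : ⋀[R]^n M →ₗ[R] R :=
  exteriorPower.alternatingMapLinearEquiv e.det

lemma eq_volCoord_smul_ιMulti_basis {n : ℕ} (e : Basis (Fin n) R M) (z : ⋀[R]^n M) :
    z = volCoord e z • exteriorPower.ιMulti R n e := by
  have h : LinearMap.id = (volCoord e).smulRight (exteriorPower.ιMulti R n e) :=
    exteriorPower.linearMap_ext <| AlternatingMap.ext fun v => by
      simpa [volCoord] using alternatingMap_eq_det_smul e (exteriorPower.ιMulti R n) v
  exact LinearMap.congr_fun h z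

lemma span_ιMulti_basis {n : ℕ} (e : Basis (Fin n) R M) :
    Submodule.span R {exteriorPower.ιMulti R n e} = ⊤ :=
  (Submodule.span_singleton_eq_top_iff R _).2 fun z => ⟨_, (eq_volCoord_smul_ιMulti_basis e z).symm⟩

/-- The wedge product of complementary degrees, as a scalar multiple of `e₀ ∧ ⋯ ∧ eₘ₊ₙ₋₁`. -/
def wedgePairing (m n : ℕ) (e : Basis (Fin (m + n)) R M) : ⋀[R]^m M →ₗ[R] ⋀[R]^n M →ₗ[R] R :=
  (DirectSum.gMulLHom R (fun i : ℕ => ⋀[R]^i M)).compr₂ (volCoord e)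

lemma mul_eq_wedgePairing_smul {m n : ℕ} (e : Basis (Fin (m + n)) R M) (x : ⋀[R]^m M)
    (y : ⋀[R]^n M) :
    (x * y : ExteriorAlgebra R M) = wedgePairing m n e x y • ExteriorAlgebra.ιMulti R (m + n) e :=
  congrArg Subtype.val
    (eq_volCoord_smul_ιMulti_basis e (DirectSum.gMulLHom R (fun i : ℕ => ⋀[R]^i M) x y))

lemma wedgePairing_ιMulti {m n : ℕ} (e : Basis (Fin (m + n)) R M) (u : Fin m → M)
    (v : Fin n → M) :
    wedgePairing m n e (exteriorPower.ιMulti R m u) (exteriorPower.ιMulti R n v) =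
      e.det (Fin.append u v) := by
  have h : DirectSum.gMulLHom R (fun i : ℕ => ⋀[R]^i M) (exteriorPower.ιMulti R m u)
      (exteriorPower.ιMulti R n v) = exteriorPower.ιMulti R (m + n) (Fin.append u v) :=
    Subtype.ext (ExteriorAlgebra.ιMulti_mul_ιMulti u v)
  rw [wedgePairing, LinearMap.compr₂_apply, h, volCoord,
    exteriorPower.alternatingMapLinearEquiv_apply_ιMulti]

lemma exteriorPower_linearMap_ext₂ {m n : ℕ} {β γ : ⋀[R]^m M →ₗ[R] ⋀[R]^n M →ₗ[R] N}
    (h : ∀ u v, β (exteriorPower.ιMulti R m u) (exteriorPower.ιMulti R n v) =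
      γ (exteriorPower.ιMulti R m u) (exteriorPower.ιMulti R n v)) : β = γ :=
  exteriorPower.linearMap_ext <| AlternatingMap.ext fun u =>
    exteriorPower.linearMap_ext <| AlternatingMap.ext fun v => h u v

/-- The linear map on the exterior square given by its universal property. -/
def bivectorLift (β : M →ₗ[R] M →ₗ[R] N) (hβ : β.IsAlt) : ⋀[R]^2 M →ₗ[R] N :=
  exteriorPower.alternatingMapLinearEquiv
    { toFun v := β (v 0) (v 1)
      map_update_add' v i x y := by fin_cases i <;> simp
      map_update_smul' v i c x := by fin_cases i <;> simp
      map_eq_zero_of_eq' v i j hv hij := by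
        fin_cases i <;> fin_cases j <;> simp_all [hβ _] }

lemma bivectorLift_ιMulti (β : M →ₗ[R] M →ₗ[R] N) (hβ : β.IsAlt) (v : Fin 2 → M) :
    bivectorLift β hβ (exteriorPower.ιMulti R 2 v) = β (v 0) (v 1) :=
  exteriorPower.alternatingMapLinearEquiv_apply_ιMulti _ v

end ExteriorPower

/-! ### Invariant bivectors -/

section HodgeMap

variable {M : Type*} [AddCommGroup M] (ι : M →ₗ[ℤ] (Fin 2 → ℂ))

/-- The map `⋀²M → ⋀²_ℝ ℂ²` induced by `ι`, in the model `HodgeSpace`. -/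
def hodgeMap : ⋀[ℤ]^2 M →ₗ[ℤ] HodgeSpace :=
  bivectorLift ((hodgeWedge.restrictScalars₁₂ ℤ ℤ).compl₁₂ ι ι) fun x => hodgeWedge_self (ι x)

lemma hodgeMap_ιMulti (v : Fin 2 → M) :
    hodgeMap ι (exteriorPower.ιMulti ℤ 2 v) = hodgeWedge (ι (v 0)) (ι (v 1)) :=
  bivectorLift_ιMulti _ _ v

variable {ι}

lemma hodgeMap_map {f : M →ₗ[ℤ] M} {A : Matrix (Fin 2) (Fin 2) ℂ}
    (hf : ∀ x, ι (f x) = A *ᵥ ι x) (x : ⋀[ℤ]^2 M) :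
    hodgeMap ι (exteriorPower.map 2 f x) = hodgeAction A (hodgeMap ι x) := by
  have h : hodgeMap ι ∘ₗ exteriorPower.map 2 f =
      (hodgeAction A).restrictScalars ℤ ∘ₗ hodgeMap ι :=
    exteriorPower.linearMap_ext <| AlternatingMap.ext fun v => by
      simp [hodgeMap_ιMulti, hodgeAction_hodgeWedge, hf]
  exact LinearMap.congr_fun h x

lemma hodgeMap_map_pow {f : M →ₗ[ℤ] M} {A : Matrix (Fin 2) (Fin 2) ℂ}
    (hf : ∀ x, ι (f x) = A *ᵥ ι x) (k : ℕ) (x : ⋀[ℤ]^2 M) :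
    hodgeMap ι ((exteriorPower.map 2 f ^ k : Module.End ℤ _) x) =
      (hodgeAction A ^ k) (hodgeMap ι x) := by
  induction k with
  | zero => rfl
  | succ k ih => rw [pow_succ', pow_succ', Module.End.mul_apply, Module.End.mul_apply,
      hodgeMap_map hf, ih]

lemma orientationForm_comp (e : Basis (Fin 4) ℤ M) (v : Fin 4 → M) :
    orientationForm (ι ∘ v) = e.det v * orientationForm (ι ∘ e) := by
  let g : M [⋀^Fin 4]→ₗ[ℤ] ℝ := AlternatingMap.compLinearMap
    { orientationForm.toMultilinearMap.restrictScalars ℤ with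
      map_eq_zero_of_eq' := fun _ _ _ => orientationForm.map_eq_zero_of_eq _ } ι
  exact (alternatingMap_eq_det_smul e g v).trans (zsmul_eq_mul _ _)

lemma hodgeForm_hodgeMap (e : Basis (Fin 4) ℤ M) (x y : ⋀[ℤ]^2 M) :
    hodgeForm (hodgeMap ι x) (hodgeMap ι y) =
      orientationForm (ι ∘ e) * wedgePairing 2 2 e x y := by
  have h : (hodgeForm.restrictScalars₁₂ ℤ ℤ).compl₁₂ (hodgeMap ι) (hodgeMap ι) =
      (wedgePairing 2 2 e).compr₂
        (LinearMap.toSpanSingleton ℤ ℝ (orientationForm (ι ∘ e))) := by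
    refine exteriorPower_linearMap_ext₂ fun u v => ?_
    have huv := hodgeForm_hodgeWedge (ι ∘ Fin.append u v)
    rw [orientationForm_comp e] at huv
    rw [LinearMap.compl₁₂_apply, LinearMap.compr₂_apply, hodgeMap_ιMulti, hodgeMap_ιMulti,
      wedgePairing_ιMulti, LinearMap.toSpanSingleton_apply, zsmul_eq_mul]
    exact huv
  simpa [mul_comm] using LinearMap.congr_fun₂ h x y

lemma span_range_eq_top_of_orientationForm_ne_zero {u : Fin 4 → Fin 2 → ℂ}
    (hu : orientationForm u ≠ 0) : Submodule.span ℝ (Set.range u) = ⊤ := by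
  have hli : LinearIndependent ℝ u :=
    not_imp_comm.1 (orientationForm.map_linearDependent u) hu
  refine hli.span_eq_top_of_card_eq_finrank ?_
  simp [finrank_real_of_complex]

lemma liftBaseChange_hodgeMap_surjective (hι : Submodule.span ℝ (Set.range ι) = ⊤) :
    Function.Surjective ((hodgeMap ι).liftBaseChange ℝ) := by
  rw [← LinearMap.range_eq_top, LinearMap.range_liftBaseChange, eq_top_iff,
    ← span_hodgeWedge_eq_top, Submodule.span_le]
  rintro _ ⟨u, v, rfl⟩
  refine LinearMap.BilinMap.apply_apply_mem_of_mem_span _ (Set.range ι) (Set.range ι) hodgeWedge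
    ?_ u v (hι ▸ Submodule.mem_top) (hι ▸ Submodule.mem_top)
  rintro _ ⟨x, rfl⟩ _ ⟨y, rfl⟩
  exact Submodule.subset_span ⟨exteriorPower.ιMulti ℤ 2 ![x, y], hodgeMap_ιMulti ι _⟩

lemma liftBaseChange_hodgeMap_injective (e : Basis (Fin 4) ℤ M)
    (hι : Submodule.span ℝ (Set.range ι) = ⊤) :
    Function.Injective ((hodgeMap ι).liftBaseChange ℝ) := by
  have := Module.Free.of_basis e
  have := Module.Finite.of_basis e
  refine (LinearMap.injective_iff_surjective_of_finrank_eq_finrank ?_).2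
    (liftBaseChange_hodgeMap_surjective hι)
  rw [Module.finrank_baseChange, exteriorPower.finrank_eq, finrank_eq_card_basis e,
    finrank_hodgeSpace]
  rfl

/-- The fixed submodule of `⋀² f`. -/
def wedgeInvariants (f : M →ₗ[ℤ] M) : Submodule ℤ (⋀[ℤ]^2 M) :=
  LinearMap.ker (exteriorPower.map 2 f - LinearMap.id)

lemma mem_wedgeInvariants {f : M →ₗ[ℤ] M} {x : ⋀[ℤ]^2 M} :
    x ∈ wedgeInvariants f ↔ exteriorPower.map 2 f x = x := by
  rw [wedgeInvariants, LinearMap.mem_ker, LinearMap.sub_apply, LinearMap.id_apply, sub_eq_zero]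

variable (ι) in
/-- The real span of the fixed submodule of `⋀² f`, mapped to `⋀²_ℝ ℂ²` by `hodgeMap`. -/
def invariantsHodgeMap (f : M →ₗ[ℤ] M) : TensorProduct ℤ ℝ (wedgeInvariants f) →ₗ[ℝ] HodgeSpace :=
  (hodgeMap ι ∘ₗ (wedgeInvariants f).subtype).liftBaseChange ℝ

lemma invariantsHodgeMap_injective (f : M →ₗ[ℤ] M) (e : Basis (Fin 4) ℤ M)
    (hι : Submodule.span ℝ (Set.range ι) = ⊤) : Function.Injective (invariantsHodgeMap ι f) := by
  have h : invariantsHodgeMap ι f =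
      (hodgeMap ι).liftBaseChange ℝ ∘ₗ (wedgeInvariants f).subtype.baseChange ℝ := by
    ext x <;> simp [invariantsHodgeMap]
  rw [h]
  exact (liftBaseChange_hodgeMap_injective e hι).comp
    (Module.Flat.lTensor_preserves_injective_linearMap _ (Submodule.injective_subtype _))

lemma fst_invariantsHodgeMap {f : M →ₗ[ℤ] M} {A : Matrix (Fin 2) (Fin 2) ℂ}
    (hf : ∀ x, ι (f x) = A *ᵥ ι x) (hA : A.det ≠ 1) (t : TensorProduct ℤ ℝ (wedgeInvariants f)) :
    (invariantsHodgeMap ι f t).1 = 0 := by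
  have hfst (x : wedgeInvariants f) : (hodgeMap ι x).1 = 0 := by
    have h := congrArg Prod.fst (hodgeMap_map hf x)
    rw [mem_wedgeInvariants.1 x.2, fst_hodgeAction] at h
    exact (mul_eq_zero.1 (show (1 - A.det) * _ = 0 by linear_combination h)).resolve_left
      (sub_ne_zero.2 hA.symm)
  have h : LinearMap.fst ℝ _ _ ∘ₗ invariantsHodgeMap ι f = 0 := by
    ext x
    simp [invariantsHodgeMap, hfst]
  exact LinearMap.congr_fun h t

lemma hodgeForm_invariantsHodgeMap (f : M →ₗ[ℤ] M) (e : Basis (Fin 4) ℤ M)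
    (s t : TensorProduct ℤ ℝ (wedgeInvariants f)) :
    hodgeForm (invariantsHodgeMap ι f s) (invariantsHodgeMap ι f t) =
      orientationForm (ι ∘ e) *
        LinearMap.BilinForm.baseChange ℝ (LinearMap.BilinForm.restrict
          (wedgePairing 2 2 e) (wedgeInvariants f)) s t := by
  have h : hodgeForm.compl₁₂ (invariantsHodgeMap ι f) (invariantsHodgeMap ι f) =
      orientationForm (ι ∘ e) • LinearMap.BilinForm.baseChange ℝ (LinearMap.BilinForm.restrict
          (wedgePairing 2 2 e) (wedgeInvariants f)) := by
    ext x y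
    simp [invariantsHodgeMap, hodgeForm_hodgeMap e]
  exact LinearMap.congr_fun₂ h s t

lemma exists_invariantsHodgeMap_eq_sum {f : M →ₗ[ℤ] M} {A : Matrix (Fin 2) (Fin 2) ℂ}
    (hf : ∀ x, ι (f x) = A *ᵥ ι x) (hι : Submodule.span ℝ (Set.range ι) = ⊤) {n : ℕ}
    (hpow : (exteriorPower.map 2 f ^ n : Module.End ℤ (⋀[ℤ]^2 M)) = 1) (x : HodgeSpace) :
    ∃ t, invariantsHodgeMap ι f t = ∑ k ∈ Finset.range n, (hodgeAction A ^ k) x := by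
  let φ : Module.End ℤ (⋀[ℤ]^2 M) := exteriorPower.map 2 f
  have hinv (y) : (∑ k ∈ Finset.range n, φ ^ k) y ∈ wedgeInvariants f := by
    have := LinearMap.congr_fun (mul_geom_sum φ n) y
    rwa [hpow, sub_self] at this
  let N : ⋀[ℤ]^2 M →ₗ[ℤ] wedgeInvariants f := (∑ k ∈ Finset.range n, φ ^ k).codRestrict _ hinv
  have hN : invariantsHodgeMap ι f ∘ₗ N.baseChange ℝ =
      (∑ k ∈ Finset.range n, hodgeAction A ^ k) ∘ₗ (hodgeMap ι).liftBaseChange ℝ := by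
    refine TensorProduct.AlgebraTensorModule.curry_injective (LinearMap.ext_ring
      (LinearMap.ext fun y => ?_))
    simp [invariantsHodgeMap, N, φ, hodgeMap_map_pow hf]
  obtain ⟨y, hy⟩ := liftBaseChange_hodgeMap_surjective hι x
  refine ⟨N.baseChange ℝ y, (LinearMap.congr_fun hN y).trans ?_⟩
  rw [LinearMap.comp_apply, hy, LinearMap.sum_apply]

theorem isLorentzian_wedgePairing_wedgeInvariants {f : M →ₗ[ℤ] M}
    {A : Matrix (Fin 2) (Fin 2) ℂ} (hf : ∀ x, ι (f x) = A *ᵥ ι x) (hA : A.det ≠ 1)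
    (hfin : IsOfFinOrder (exteriorPower.map 2 f : Module.End ℤ (⋀[ℤ]^2 M)))
    {e : Basis (Fin 4) ℤ M} (he : 0 < orientationForm (ι ∘ e)) :
    IsLorentzian (LinearMap.BilinForm.baseChange ℝ (LinearMap.BilinForm.restrict
      (wedgePairing 2 2 e) (wedgeInvariants f))) := by
  have hι : Submodule.span ℝ (Set.range ι) = ⊤ :=
    top_unique <| (span_range_eq_top_of_orientationForm_ne_zero he.ne').ge.trans
      (Submodule.span_mono (Set.range_comp_subset_range _ _))
  let G := LinearMap.snd ℝ _ _ ∘ₗ invariantsHodgeMap ι f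
  have hG (t) : invariantsHodgeMap ι f t = (0, G t) :=
    Prod.ext (fst_invariantsHodgeMap hf hA t) rfl
  have hinj : Function.Injective G := fun s t hst =>
    invariantsHodgeMap_injective f e hι (by rw [hG, hG, hst])
  refine isLorentzian_detPolar.of_injective hinj he (fun s t => ?_) ?_
  · rw [← hodgeForm_invariantsHodgeMap, hG, hG, hodgeForm_apply, inner_zero_left, mul_zero,
      zero_add]
  · obtain ⟨n, hn, hpow⟩ := isOfFinOrder_iff_pow_eq_one.1 hfin
    obtain ⟨t, ht⟩ := exists_invariantsHodgeMap_eq_sum hf hι hpow (0, 1)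
    refine ⟨t, ?_⟩
    rw [LinearMap.comp_apply, ht]
    exact detPolar_sum_hodgeAction_pos A hn

end HodgeMap

/-! ### Lattices in `ℂ²` -/

section Lattice

variable {Λ : Submodule ℤ (ℂ × ℂ)}

variable (Λ) in
/-- The inclusion of `Λ`, followed by the identification of `ℂ × ℂ` with coordinate vectors. -/
def latticeCoord : Λ →ₗ[ℤ] (Fin 2 → ℂ) :=
  (Basis.finTwoProd ℂ).equivFun.toLinearMap.restrictScalars ℤ ∘ₗ Λ.subtype

lemma latticeCoord_latRestrict (σ : (ℂ × ℂ) ≃ₗ[ℂ] (ℂ × ℂ)) (h : PreservesLattice σ Λ) (x : Λ) :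
    latticeCoord Λ (latRestrict σ Λ h x) =
      LinearMap.toMatrix (Basis.finTwoProd ℂ) (Basis.finTwoProd ℂ) σ *ᵥ latticeCoord Λ x :=
  (LinearMap.toMatrix_mulVec_repr (Basis.finTwoProd ℂ) (Basis.finTwoProd ℂ) σ.toLinearMap x.1).symm

lemma IsComplexTorusLattice.exists_basis_orientationForm_pos (hΛ : IsComplexTorusLattice Λ) :
    ∃ e : Basis (Fin 4) ℤ Λ, 0 < orientationForm (latticeCoord Λ ∘ e) := by
  obtain ⟨b, rfl⟩ := hΛ
  let e := b.restrictScalars ℤ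
  have hne : orientationForm (latticeCoord _ ∘ e) ≠ 0 := by
    convert orientationForm_basis_ne_zero
      (b.map ((Basis.finTwoProd ℂ).equivFun.restrictScalars ℝ)) using 2
    ext1 i
    simp [latticeCoord, e]
  rcases hne.lt_or_gt with hneg | hpos
  · refine ⟨e.reindex (Equiv.swap 0 1), ?_⟩
    rw [Basis.coe_reindex, Equiv.symm_swap, ← Function.comp_assoc, AlternatingMap.map_swap _ _
      (by decide)]
    exact neg_pos.2 hneg
  · exact ⟨e, hpos⟩

lemma invLat_eq_wedgeInvariants (σ : (ℂ × ℂ) ≃ₗ[ℂ] (ℂ × ℂ)) (h : PreservesLattice σ Λ) :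
    invLat σ Λ h = wedgeInvariants (latRestrict σ Λ h).toLinearMap := by
  rw [invLat, extSq, extPowMap_eq_map, wedgeInvariants]

end Lattice

theorem stmt_5_general (Λ : Submodule ℤ (ℂ × ℂ)) (hΛ : IsComplexTorusLattice Λ)
    (σ : (ℂ × ℂ) ≃ₗ[ℂ] (ℂ × ℂ)) (hσΛ : PreservesLattice σ Λ)
    (hns : LinearMap.det (σ : (ℂ × ℂ) →ₗ[ℂ] (ℂ × ℂ)) ≠ 1)
    (hfin : IsOfFinOrder (extSq σ Λ hσΛ)) :
    ∃ vol : ⋀[ℤ]^4 ↥Λ, Submodule.span ℤ {vol} = ⊤ ∧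
      ∃ b : ⋀[ℤ]^2 ↥Λ →ₗ[ℤ] ⋀[ℤ]^2 ↥Λ →ₗ[ℤ] ℤ, IsWedgeForm Λ vol b ∧
        ∃ v : Basis (Fin (Module.finrank ℤ ↥(invLat σ Λ hσΛ))) ℤ ↥(invLat σ Λ hσΛ),
          ∃ P : Matrix (Fin (Module.finrank ℤ ↥(invLat σ Λ hσΛ)))
              (Fin (Module.finrank ℤ ↥(invLat σ Λ hσΛ))) ℝ,
            IsUnit P.det ∧
              Pᵀ * (Matrix.of fun i j =>
                  ((b (v i : ⋀[ℤ]^2 ↥Λ) (v j : ⋀[ℤ]^2 ↥Λ) : ℤ) : ℝ)) * P =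
                Matrix.diagonal (fun i : Fin (Module.finrank ℤ ↥(invLat σ Λ hσΛ)) =>
                  if (i : ℕ) = 0 then (1 : ℝ) else -1) := by
  obtain ⟨e, he⟩ := hΛ.exists_basis_orientationForm_pos
  have := Module.Free.of_basis e
  have := Module.Finite.of_basis e
  rw [extSq, extPowMap_eq_map] at hfin
  refine ⟨exteriorPower.ιMulti ℤ 4 e, span_ιMulti_basis e, wedgePairing 2 2 e,
    mul_eq_wedgePairing_smul (m := 2) (n := 2) e, Module.finBasis ℤ _, ?_⟩
  rw [invLat_eq_wedgeInvariants]
  exact (isLorentzian_wedgePairing_wedgeInvariants (latticeCoord_latRestrict σ hσΛ)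
    (by rwa [LinearMap.det_toMatrix]) hfin he).exists_congruent_gram (Module.finBasis ℤ _)

/-- If `σ` is a non-symplectic automorphism of finite order of the `2`-torus `ℂ²/Λ` whose
action on `⋀²Λ` has prime order `p`, then for some generator `vol` of `⋀⁴Λ` the associated
wedge form, restricted to the invariant lattice `T`, has signature `(1, r-1)`: its real Gram
matrix is congruent to `diag(1, -1, …, -1)`. -/
theorem stmt_5 (Λ : Submodule ℤ (ℂ × ℂ)) (hΛ : IsComplexTorusLattice Λ)
    (σ : (ℂ × ℂ) ≃ₗ[ℂ] (ℂ × ℂ)) (hord : IsOfFinOrder σ) (hσΛ : PreservesLattice σ Λ)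
    (hns : LinearMap.det (σ : (ℂ × ℂ) →ₗ[ℂ] (ℂ × ℂ)) ≠ 1)
    (p : ℕ) (hp : p.Prime) (hordp : orderOf (extSq σ Λ hσΛ) = p) :
    ∃ vol : ⋀[ℤ]^4 ↥Λ, Submodule.span ℤ {vol} = ⊤ ∧
      ∃ b : ⋀[ℤ]^2 ↥Λ →ₗ[ℤ] ⋀[ℤ]^2 ↥Λ →ₗ[ℤ] ℤ, IsWedgeForm Λ vol b ∧
        ∃ v : Basis (Fin (Module.finrank ℤ ↥(invLat σ Λ hσΛ))) ℤ ↥(invLat σ Λ hσΛ),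
          ∃ P : Matrix (Fin (Module.finrank ℤ ↥(invLat σ Λ hσΛ)))
              (Fin (Module.finrank ℤ ↥(invLat σ Λ hσΛ))) ℝ,
            IsUnit P.det ∧
              Pᵀ * (Matrix.of fun i j =>
                  ((b (v i : ⋀[ℤ]^2 ↥Λ) (v j : ⋀[ℤ]^2 ↥Λ) : ℤ) : ℝ)) * P =
                Matrix.diagonal (fun i : Fin (Module.finrank ℤ ↥(invLat σ Λ hσΛ)) =>
                  if (i : ℕ) = 0 then (1 : ℝ) else -1) :=
  stmt_5_general Λ hΛ σ hσΛ hns (orderOf_pos_iff.1 (hordp ▸ hp.pos))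
end
end

section
/- Let Λ be a ℤ-lattice in ℂ² and let σ be a ℂ-linear automorphism of ℂ² of finite order with σ(Λ) = Λ, which is non-symplectic (det_ℂ σ ≠ 1) and such that ⋀²(σ|_Λ) has prime order p. Let T = {x ∈ ⋀²Λ : ⋀²(σ|_Λ)(x) = x} be the invariant lattice. Then there exists a generator vol of ⋀⁴Λ such that T, equipped with the restriction of the wedge form determined by vol, is isometric to one of the following seven lattices: U, U(2), ⟨2⟩⊕⟨−2⟩, U⊕⟨−2⟩⊕⟨−2⟩ (occurring for p = 2), U, U(3), U⊕A₂(−1) (occurring for p = 3), or H₅ (occurring for p = 5). -/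
set_option synthInstance.maxHeartbeats 1000000
set_option maxHeartbeats 1000000

open ExteriorAlgebra Module Matrix

noncomputable section

/-!
Write `g` for `σ` restricted to `Λ`. Its determinant is `|det σ|² = 1`, and an endomorphism of a
module of rank at least `3` whose exterior square is the identity is `1` or `-1`. Hence `g ^ p` is
`1` or `-1`; since `g` and `-g` have the same exterior square, one may assume `g ^ p = 1`, or else
`p = 2` and `g ^ 2 = -1`.

Let `N` be the kernel of the `n`-th cyclotomic polynomial at `g`, with `n = 2`, `p` or `4`. The
ring `ℤ[ζₙ]` is a principal ideal domain, so `N` is free over it, while `g` is trivial on `Λ / N`.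
Thus `g` is determined by blocks of companion matrices and a gluing matrix, which a change of basis
brings into one of finitely many normal forms. The rank bound `p - 1 ≤ 4` leaves `p = 2, 3, 5`, and
the invariant lattice of each normal form is read off from its matrix of `2 × 2` minors.
-/

namespace WedgeLattice

section ExteriorPower

variable {R M N : Type*} [CommRing R] [AddCommGroup M] [Module R M] [AddCommGroup N] [Module R N]

lemma extPowMap_eq_map (n : ℕ) (f : M →ₗ[R] N) : extPowMap n f = exteriorPower.map n f := by
  refine exteriorPower.linearMap_ext (AlternatingMap.ext fun v => Subtype.ext ?_)
  rw [LinearMap.compAlternatingMap_apply, LinearMap.compAlternatingMap_apply,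
    exteriorPower.map_apply_ιMulti]
  exact ExteriorAlgebra.map_apply_ιMulti f v

lemma extPowMap_ιMulti (n : ℕ) (f : M →ₗ[R] N) (v : Fin n → M) :
    extPowMap n f (exteriorPower.ιMulti R n v) = exteriorPower.ιMulti R n (f ∘ v) := by
  rw [extPowMap_eq_map, exteriorPower.map_apply_ιMulti]

lemma extPowMap_one (n : ℕ) : extPowMap n (1 : End R M) = (1 : End R (⋀[R]^n M)) := by
  rw [extPowMap_eq_map]
  exact exteriorPower.map_id

lemma extPowMap_mul (n : ℕ) (f g : End R M) :
    extPowMap n (f * g) = (extPowMap n f * extPowMap n g : End R (⋀[R]^n M)) := by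
  simp only [extPowMap_eq_map]
  exact exteriorPower.map_comp g f

lemma extPowMap_pow (n k : ℕ) (f : End R M) :
    extPowMap n (f ^ k) = (extPowMap n f ^ k : End R (⋀[R]^n M)) := by
  induction k with
  | zero => simp only [pow_zero, extPowMap_one]
  | succ k ih => rw [pow_succ, pow_succ, extPowMap_mul, ih]

lemma extPowMap_smul (n : ℕ) (r : R) (f : M →ₗ[R] N) :
    extPowMap n (r • f) = r ^ n • extPowMap n f := by
  refine exteriorPower.linearMap_ext (AlternatingMap.ext fun v => ?_)
  simp only [LinearMap.compAlternatingMap_apply, LinearMap.smul_apply, extPowMap_ιMulti]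
  exact ((exteriorPower.ιMulti R n).map_smul_univ (fun _ => r) (f ∘ v)).trans (by simp)

lemma extPowMap_two_neg (f : M →ₗ[R] N) : extPowMap 2 (-f) = extPowMap 2 f := by
  simpa using extPowMap_smul 2 (-1) f

lemma minor_eq_of_extPowMap_two_eq_one {f : End R M}
    (hf : extPowMap 2 f = (1 : End R (⋀[R]^2 M))) (φ ψ : Dual R M) (x y : M) :
    φ (f x) * ψ (f y) - ψ (f x) * φ (f y) = φ x * ψ y - ψ x * φ y := by
  have h := congrArg (exteriorPower.pairingDual R M 2 (exteriorPower.ιMulti R 2 ![φ, ψ]))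
    (LinearMap.congr_fun hf (exteriorPower.ιMulti R 2 ![x, y]))
  simpa [extPowMap_ιMulti, exteriorPower.pairingDual_ιMulti_ιMulti, Matrix.det_fin_two] using h

end ExteriorPower

section Scalar

variable {R M ι : Type*} [CommRing R] [AddCommGroup M] [Module R M] [Fintype ι]

lemma exists_eq_algebraMap_of_extPowMap_two_eq_one (e : Basis ι R M) (hι : 2 < Fintype.card ι)
    {f : End R M} (hf : extPowMap 2 f = (1 : End R (⋀[R]^2 M))) :
    ∃ a : R, a * a = 1 ∧ f = algebraMap R (End R M) a := by
  classical
  let A : Matrix ι ι R := LinearMap.toMatrix e e f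
  have minor (k l i j : ι) : A k i * A l j - A l i * A k j =
      (1 : Matrix ι ι R) k i * (1 : Matrix ι ι R) l j -
        (1 : Matrix ι ι R) l i * (1 : Matrix ι ι R) k j := by
    simpa [A, LinearMap.toMatrix_apply, Finsupp.single_apply, Matrix.one_apply, eq_comm] using
      minor_eq_of_extPowMap_two_eq_one hf (e.coord k) (e.coord l) (e i) (e j)
  have exists_third (i j : ι) : ∃ k, k ≠ i ∧ k ≠ j := by
    obtain ⟨k, -, hk⟩ := Finset.exists_mem_notMem_of_card_lt_card
      (s := {i, j}) (t := Finset.univ) (Finset.card_le_two.trans_lt hι)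
    exact ⟨k, by simpa using hk⟩
  have offDiag (l i : ι) (hli : l ≠ i) : A l i = 0 := by
    obtain ⟨j, hjl, hji⟩ := exists_third l i
    have hij := minor i j i j
    have hlj := minor l j i j
    have hil := minor l i i j
    simp only [Matrix.one_apply, hli, hji, hji.symm, hjl.symm, if_true, if_false] at hij hlj hil
    linear_combination -A l i * hij + A i i * hlj - A j i * hil
  have diag_mul (i j : ι) (hij : i ≠ j) : A i i * A j j = 1 := by
    simpa [offDiag j i hij.symm, hij.symm] using minor i j i j
  have diag (i j : ι) : A i i = A j j := by
    obtain ⟨k, hki, hkj⟩ := exists_third i j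
    linear_combination A j j * diag_mul k i hki - A i i * diag_mul k j hkj
  obtain ⟨i⟩ : Nonempty ι := Fintype.card_pos_iff.1 (zero_lt_two.trans hι)
  obtain ⟨j, hji, -⟩ := exists_third i i
  refine ⟨A i i, by rw [← diag_mul j i hji, diag j i],
    (LinearMap.toMatrix e e).injective (Matrix.ext fun k l => ?_)⟩
  change A k l = _
  rw [LinearMap.toMatrix_algebraMap]
  obtain rfl | hkl := eq_or_ne k l
  · simp [diag k i]
  · simp [offDiag k l hkl, hkl]

end Scalar

lemma eq_one_or_eq_neg_one_of_extPowMap_two_eq_one {M : Type*} [AddCommGroup M] [Module ℤ M]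
    [Module.Free ℤ M] (hM : 2 < finrank ℤ M) {f : End ℤ M}
    (hf : extPowMap 2 f = (1 : End ℤ (⋀[ℤ]^2 M))) : f = 1 ∨ f = -1 := by
  have := Module.finite_of_finrank_pos (zero_lt_two.trans hM)
  obtain ⟨a, ha, rfl⟩ :=
    exists_eq_algebraMap_of_extPowMap_two_eq_one (finBasis ℤ M) (by rwa [Fintype.card_fin]) hf
  exact (mul_self_eq_one_iff.1 ha).imp (fun h => by rw [h, map_one])
    (fun h => by rw [h, map_neg, map_one])

section Bivectors

variable {R M : Type*} [CommRing R] [AddCommGroup M] [Module R M]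

/-- The six increasing pairs of indices in `Fin 4`, in lexicographic order. They index the
coordinates of bivectors. -/
def indexPair : Fin 6 → Fin 2 → Fin 4 := ![![0, 1], ![0, 2], ![0, 3], ![1, 2], ![1, 3], ![2, 3]]

/-- The enumeration of the two-element subsets of `Fin 4` by `indexPair`, in the form required by
`Module.Basis.exteriorPower`. -/
def indexPairEquiv : Fin 6 ≃ Set.powersetCard (Fin 4) 2 :=
  Equiv.ofBijective
    (fun k => Set.powersetCard.ofFinEmbEquiv
      (OrderEmbedding.ofStrictMono (indexPair k) (by revert k; decide)))
    (Function.Injective.bijective_of_nat_card_le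
      (Set.powersetCard.ofFinEmbEquiv.injective.comp fun k l h => by
        have h' : indexPair k = indexPair l := congrArg DFunLike.coe h
        revert k l
        decide)
      (by rw [Set.powersetCard.card, Nat.card_fin, Nat.card_fin]; decide))

lemma ofFinEmbEquiv_symm_indexPairEquiv (k : Fin 6) :
    ⇑(Set.powersetCard.ofFinEmbEquiv.symm (indexPairEquiv k)) = indexPair k := by
  simp [indexPairEquiv]

/-- The basis `e i ∧ e j`, `i < j`, of `⋀²M` attached to a basis `e` of `M`. -/
def bivectorBasis (e : Basis (Fin 4) R M) : Basis (Fin 6) R (⋀[R]^2 M) :=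
  (e.exteriorPower 2).reindex indexPairEquiv.symm

lemma bivectorBasis_apply (e : Basis (Fin 4) R M) (k : Fin 6) :
    bivectorBasis e k = exteriorPower.ιMulti R 2 (e ∘ indexPair k) := by
  rw [bivectorBasis, Basis.reindex_apply, Equiv.symm_symm, exteriorPower.basis_apply,
    exteriorPower.ιMulti_family, ofFinEmbEquiv_symm_indexPairEquiv]

lemma bivectorBasis_repr_ιMulti (e : Basis (Fin 4) R M) (v : Fin 2 → M) (k : Fin 6) :
    (bivectorBasis e).repr (exteriorPower.ιMulti R 2 v) k =
      e.repr (v 0) (indexPair k 0) * e.repr (v 1) (indexPair k 1) -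
        e.repr (v 0) (indexPair k 1) * e.repr (v 1) (indexPair k 0) := by
  rw [bivectorBasis, Basis.repr_reindex_apply, Equiv.symm_symm, exteriorPower.basis_repr_apply,
    exteriorPower.ιMultiDual_apply_ιMulti, ofFinEmbEquiv_symm_indexPairEquiv, Matrix.det_fin_two]
  rfl

/-- The second compound of a `4 × 4` matrix: the matrix of its `2 × 2` minors. -/
def compound (A : Matrix (Fin 4) (Fin 4) R) : Matrix (Fin 6) (Fin 6) R :=
  Matrix.of fun k l => A (indexPair k 0) (indexPair l 0) * A (indexPair k 1) (indexPair l 1) -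
    A (indexPair k 1) (indexPair l 0) * A (indexPair k 0) (indexPair l 1)

lemma toMatrix_extPowMap_two (e : Basis (Fin 4) R M) (f : End R M) :
    LinearMap.toMatrix (bivectorBasis e) (bivectorBasis e) (extPowMap 2 f) =
      compound (LinearMap.toMatrix e e f) := by
  ext k l
  rw [LinearMap.toMatrix_apply, bivectorBasis_apply, extPowMap_ιMulti, bivectorBasis_repr_ιMulti]
  simp [compound, LinearMap.toMatrix_apply]

/-- The generator of `⋀⁴M` attached to a basis of `M`. -/
def volume (e : Basis (Fin 4) R M) : ⋀[R]^4 M := exteriorPower.ιMulti R 4 e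

lemma ιMulti_four_eq_det_smul_volume (e : Basis (Fin 4) R M) (v : Fin 4 → M) :
    exteriorPower.ιMulti R 4 v = e.det v • volume e := by
  suffices h : exteriorPower.ιMulti R 4 (M := M) =
      (LinearMap.toSpanSingleton R _ (volume e)).compAlternatingMap e.det from
    congrArg (· v) h
  refine Basis.ext_alternating e fun i hi => ?_
  let s : Equiv.Perm (Fin 4) := Equiv.ofBijective i (Finite.injective_iff_bijective.1 hi)
  change exteriorPower.ιMulti R 4 (e ∘ s) =
    (LinearMap.toSpanSingleton R _ (volume e)).compAlternatingMap e.det (e ∘ s)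
  rw [AlternatingMap.map_perm, AlternatingMap.map_perm, LinearMap.compAlternatingMap_apply,
    Basis.det_self, LinearMap.toSpanSingleton_apply, one_smul]
  rfl

lemma span_volume (e : Basis (Fin 4) R M) : Submodule.span R {volume e} = ⊤ := by
  rw [eq_top_iff, ← exteriorPower.ιMulti_span, Submodule.span_le]
  rintro _ ⟨v, rfl⟩
  rw [ιMulti_four_eq_det_smul_volume e]
  exact Submodule.smul_mem _ _ (Submodule.mem_span_singleton_self _)

/-- The Gram matrix of the wedge form in the basis `bivectorBasis e`. -/
def wedgeGram : Matrix (Fin 6) (Fin 6) ℤ :=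
  !![0, 0, 0, 0, 0, 1; 0, 0, 0, 0, -1, 0; 0, 0, 0, 1, 0, 0;
     0, 0, 1, 0, 0, 0; 0, -1, 0, 0, 0, 0; 1, 0, 0, 0, 0, 0]

lemma det_append_indexPair (k l : Fin 6) :
    (Matrix.of fun i j : Fin 4 =>
      if (Fin.append (indexPair k) (indexPair l) : Fin 4 → Fin 4) j = i then (1 : ℤ) else 0).det =
      wedgeGram k l := by
  fin_cases k <;> fin_cases l <;> decide +kernel

lemma basis_det_comp_append_indexPair (e : Basis (Fin 4) R M) (k l : Fin 6) :
    e.det (e ∘ (Fin.append (indexPair k) (indexPair l) : Fin 4 → Fin 4)) = wedgeGram k l := by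
  have h : e.toMatrix (e ∘ (Fin.append (indexPair k) (indexPair l) : Fin 4 → Fin 4)) =
      (Int.castRingHom R).mapMatrix (Matrix.of fun i j =>
        if (Fin.append (indexPair k) (indexPair l) : Fin 4 → Fin 4) j = i then (1 : ℤ) else 0) := by
    ext i j
    simp [Basis.toMatrix_apply, Finsupp.single_apply]
  rw [Basis.det_apply, h, ← RingHom.map_det, det_append_indexPair, eq_intCast]

lemma bivectorBasis_mul_bivectorBasis (e : Basis (Fin 4) R M) (k l : Fin 6) :
    (bivectorBasis e k : ExteriorAlgebra R M) * bivectorBasis e l =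
      (wedgeGram k l : R) • (volume e : ExteriorAlgebra R M) := by
  rw [bivectorBasis_apply, bivectorBasis_apply, ← basis_det_comp_append_indexPair e k l,
    ← Submodule.coe_smul, ← ιMulti_four_eq_det_smul_volume, exteriorPower.ιMulti_apply_coe,
    exteriorPower.ιMulti_apply_coe, exteriorPower.ιMulti_apply_coe,
    ExteriorAlgebra.ιMulti_mul_ιMulti]
  exact congrArg (ExteriorAlgebra.ιMulti R 4) (funext fun i => by fin_cases i <;> rfl)

/-- The wedge form on `⋀²M` determined by `volume e`. -/
def wedgeForm (e : Basis (Fin 4) R M) : ⋀[R]^2 M →ₗ[R] ⋀[R]^2 M →ₗ[R] R :=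
  Matrix.toLinearMap₂ (bivectorBasis e) (bivectorBasis e) (wedgeGram.map (Int.castRingHom R))

lemma wedgeForm_bivectorBasis (e : Basis (Fin 4) R M) (k l : Fin 6) :
    wedgeForm e (bivectorBasis e k) (bivectorBasis e l) = wedgeGram k l := by
  rw [← LinearMap.toMatrix₂_apply, wedgeForm, LinearMap.toMatrix₂_toLinearMap₂]
  rfl

lemma mul_eq_wedgeForm_smul_volume (e : Basis (Fin 4) R M) (x y : ⋀[R]^2 M) :
    (x : ExteriorAlgebra R M) * y = wedgeForm e x y • (volume e : ExteriorAlgebra R M) := by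
  have h : (LinearMap.mul R (ExteriorAlgebra R M)).compl₁₂ (⋀[R]^2 M).subtype (⋀[R]^2 M).subtype =
      (wedgeForm e).compr₂ (LinearMap.toSpanSingleton R _ (volume e : ExteriorAlgebra R M)) :=
    LinearMap.ext_basis (bivectorBasis e) (bivectorBasis e) fun k l => by
      simp [bivectorBasis_mul_bivectorBasis, wedgeForm_bivectorBasis]
  exact LinearMap.congr_fun₂ h x y

end Bivectors

section FixedSublattice

lemma range_eq_ker_sub_id_of_comp_sum_pow {R N P : Type*} [CommRing R] [AddCommGroup N]
    [Module R N] [AddCommGroup P] [Module R P] [IsAddTorsionFree N] {f : End R N} {φ : P →ₗ[R] N}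
    {ψ : N →ₗ[R] P} {p : ℕ} (hp : p ≠ 0) (hφ : f ∘ₗ φ = φ)
    (hψ : φ ∘ₗ ψ ∘ₗ (∑ i ∈ Finset.range p, f ^ i : End R N) = ∑ i ∈ Finset.range p, f ^ i) :
    LinearMap.range φ = LinearMap.ker (f - LinearMap.id) := by
  apply le_antisymm
  · rintro _ ⟨x, rfl⟩
    rw [LinearMap.mem_ker, LinearMap.sub_apply, LinearMap.id_apply, sub_eq_zero]
    exact LinearMap.congr_fun hφ x
  · intro y hy
    have hfy : f y = y := sub_eq_zero.1 hy
    -- On the fixed submodule `∑ i < p, f ^ i` is multiplication by `p`, which can be cancelled.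
    have hsum : (∑ i ∈ Finset.range p, f ^ i : End R N) y = p • y := by
      have hpow (i : ℕ) : (f ^ i) y = y := by
        rw [Module.End.coe_pow]
        exact Function.iterate_fixed hfy i
      simp [hpow]
    have h := LinearMap.congr_fun hψ y
    rw [LinearMap.comp_apply, LinearMap.comp_apply, hsum, map_nsmul, map_nsmul] at h
    exact ⟨ψ y, nsmul_right_injective hp h⟩

lemma exists_basis_ker_sub_id {R N ι κ : Type*} [CommRing R] [AddCommGroup N] [Module R N]
    [IsAddTorsionFree N] [Fintype ι] [DecidableEq ι] [Fintype κ] [DecidableEq κ]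
    (c : Basis ι R N) (b : N →ₗ[R] N →ₗ[R] R) (f : End R N) {p : ℕ} (hp : p ≠ 0)
    {C : Matrix ι ι R} (hC : LinearMap.toMatrix c c f = C)
    {V : Matrix ι κ R} {K : Matrix κ ι R} (hCV : C * V = V) (hKV : K * V = 1)
    (hVK : V * (K * ∑ i ∈ Finset.range p, C ^ i) = ∑ i ∈ Finset.range p, C ^ i) :
    ∃ v : Basis κ R (LinearMap.ker (f - LinearMap.id)),
      ∀ i j, b (v i) (v j) = (Vᵀ * LinearMap.toMatrix₂ c c b * V) i j := by
  let φ : (κ → R) →ₗ[R] N := Matrix.toLin (Pi.basisFun R κ) c V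
  let ψ : N →ₗ[R] (κ → R) := Matrix.toLin c (Pi.basisFun R κ) K
  have hf : f = Matrix.toLin c c C := by rw [← hC, Matrix.toLin_toMatrix]
  have hinj : Function.Injective φ := by
    refine Function.LeftInverse.injective (g := ψ) fun x => ?_
    rw [← LinearMap.comp_apply, ← Matrix.toLin_mul, hKV, Matrix.toLin_one, LinearMap.id_apply]
  have hrange : LinearMap.range φ = LinearMap.ker (f - LinearMap.id) := by
    refine range_eq_ker_sub_id_of_comp_sum_pow (ψ := ψ) hp ?_ ?_
    · rw [hf, ← Matrix.toLin_mul, hCV]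
    · have hpow (i : ℕ) : f ^ i = Matrix.toLin c c (C ^ i) := by rw [hf, Matrix.toLin_pow]
      simp only [hpow, ← map_sum]
      rw [← Matrix.toLin_mul, ← Matrix.toLin_mul, hVK]
  refine ⟨(Pi.basisFun R κ).map
    ((LinearEquiv.ofInjective φ hinj).trans (LinearEquiv.ofEq _ _ hrange)), fun i j => ?_⟩
  have hGram : LinearMap.toMatrix₂ (Pi.basisFun R κ) (Pi.basisFun R κ) (b.compl₁₂ φ φ) =
      Vᵀ * LinearMap.toMatrix₂ c c b * V := by
    rw [LinearMap.toMatrix₂_compl₁₂ c c, LinearMap.toMatrix_toLin]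
  rw [← hGram, LinearMap.toMatrix₂_apply]
  rfl

end FixedSublattice

section Represents

variable {R M ι κ : Type*} [CommRing R] [AddCommGroup M] [Module R M]
  [Fintype ι] [DecidableEq ι] [Fintype κ] [DecidableEq κ] {f : End R M} {A A' : Matrix ι ι R}

/-- The endomorphism `f` has matrix `A` in some basis. -/
def Represents (f : End R M) (A : Matrix ι ι R) : Prop :=
  ∃ e : Basis ι R M, LinearMap.toMatrix e e f = A

lemma Represents.finrank_eq [Nontrivial R] (h : Represents f A) :
    finrank R M = Fintype.card ι := by
  obtain ⟨e, -⟩ := h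
  exact finrank_eq_card_basis e

lemma Represents.det_eq (h : Represents f A) : LinearMap.det f = A.det := by
  obtain ⟨e, rfl⟩ := h
  rw [LinearMap.det_toMatrix]

lemma Represents.eq_one (h : Represents f (1 : Matrix ι ι R)) : f = 1 := by
  obtain ⟨e, he⟩ := h
  exact (LinearMap.toMatrix e e).injective (he.trans (LinearMap.toMatrix_one e).symm)

lemma Represents.eq_neg_one (h : Represents f (-1 : Matrix ι ι R)) : f = -1 := by
  obtain ⟨e, he⟩ := h
  refine (LinearMap.toMatrix e e).injective (he.trans ?_)
  rw [map_neg, LinearMap.toMatrix_one]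

lemma Represents.reindex (h : Represents f A) (s : ι ≃ κ) :
    Represents f (Matrix.reindex s s A) := by
  obtain ⟨e, rfl⟩ := h
  refine ⟨e.reindex s, Matrix.ext fun i j => ?_⟩
  simp [LinearMap.toMatrix_apply]

lemma Represents.conj (h : Represents f A)
    {S T : Matrix ι ι R} (hST : S * T = 1) (hS : A * S = S * A') : Represents f A' := by
  obtain ⟨e, rfl⟩ := h
  have hTS : T * S = 1 := mul_eq_one_comm.1 hST
  let e' : Basis ι R M := e.map (Matrix.toLinOfInv e e hST hTS)
  have he : e.toMatrix e' = S := by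
    ext i j
    simp [e', Basis.toMatrix_apply, Matrix.toLinOfInv, Matrix.toLin_self, Finsupp.single_apply]
  have he' : e'.toMatrix e = T :=
    left_inv_eq_right_inv (by rw [← he, Basis.toMatrix_mul_toMatrix_flip]) hST
  refine ⟨e', ?_⟩
  rw [← basis_toMatrix_mul_linearMap_toMatrix_mul_basis_toMatrix e' e e' e, he, he', mul_assoc,
    hS, ← mul_assoc, hTS, one_mul]

end Represents

section InvariantGram

variable {M : Type*} [AddCommGroup M] [Module ℤ M]

/-- In the wedge form determined by the volume element of a suitable basis, the invariant
lattice of `⋀²h` has Gram matrix `G`. -/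
def HasInvariantGram (h : End ℤ M) {n : ℕ} (G : Matrix (Fin n) (Fin n) ℤ) : Prop :=
  ∃ e : Basis (Fin 4) ℤ M,
    HasGramMatrix (wedgeForm e) (LinearMap.ker (extPowMap 2 h - LinearMap.id)) G

/- The columns of `V` are the coordinates of the basis of the invariant lattice; the left inverse
`K` turns the generation of that lattice by them into a finite matrix identity. -/
lemma Represents.hasInvariantGram {h : End ℤ M} {A : Matrix (Fin 4) (Fin 4) ℤ}
    (hA : Represents h A) {p n : ℕ} (hp : p ≠ 0) {G : Matrix (Fin n) (Fin n) ℤ}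
    (V : Matrix (Fin 6) (Fin n) ℤ) (K : Matrix (Fin n) (Fin 6) ℤ)
    (hCV : compound A * V = V) (hKV : K * V = 1)
    (hVK : V * (K * ∑ i ∈ Finset.range p, compound A ^ i) =
      ∑ i ∈ Finset.range p, compound A ^ i)
    (hG : Vᵀ * wedgeGram * V = G) : HasInvariantGram h G := by
  obtain ⟨e, rfl⟩ := hA
  have : IsAddTorsionFree (⋀[ℤ]^2 M) :=
    (bivectorBasis e).repr.injective.isAddTorsionFree
      (bivectorBasis e).repr.toAddEquiv.toAddMonoidHom
  obtain ⟨v, hv⟩ := exists_basis_ker_sub_id (bivectorBasis e) (wedgeForm e) (extPowMap 2 h) hp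
    (toMatrix_extPowMap_two e h) hCV hKV hVK
  refine ⟨e, v, fun i j => (hv i j).trans ?_⟩
  rw [wedgeForm, LinearMap.toMatrix₂_toLinearMap₂, ← hG]
  rfl

end InvariantGram

section Gluing

variable {R M ι κ ι' κ' : Type*} [CommRing R] [AddCommGroup M] [Module R M] [Fintype ι]
  [DecidableEq ι] [Fintype κ] [DecidableEq κ] [Fintype ι'] [DecidableEq ι'] [Fintype κ']
  [DecidableEq κ'] {f : End R M} {B P : Matrix ι ι R} {X : Matrix ι κ R}
  {Q : Matrix κ κ R}

/-- The matrix of an endomorphism preserving a submodule, on which it acts by `B`, and acting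
trivially on the quotient. The block `X` describes how submodule and quotient are glued. -/
def glueMatrix (B : Matrix ι ι R) (X : Matrix ι κ R) : Matrix (ι ⊕ κ) (ι ⊕ κ) R :=
  Matrix.fromBlocks B X 0 1

lemma Represents.of_glueMatrix [IsEmpty κ] (h : Represents f (glueMatrix B X)) :
    Represents f B :=
  h.reindex (Equiv.sumEmpty ι κ)

lemma Represents.eq_one_of_glueMatrix [IsEmpty ι] (h : Represents f (glueMatrix B X)) :
    f = 1 :=
  Represents.eq_one (ι := κ) (h.reindex (Equiv.emptySum ι κ))

lemma Represents.reindex_glueMatrix (h : Represents f (glueMatrix B X)) (s : ι ≃ ι')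
    (t : κ ≃ κ') : Represents f (glueMatrix (Matrix.reindex s s B) (Matrix.reindex s t X)) := by
  convert h.reindex (s.sumCongr t)
  ext (i | i) (j | j) <;> simp [glueMatrix, Matrix.one_apply]

lemma Represents.glueMatrix_add (h : Represents f (glueMatrix B X)) (Y : Matrix ι κ R) :
    Represents f (glueMatrix B (X + (B * Y - Y))) := by
  refine h.conj (S := Matrix.fromBlocks 1 Y 0 1) (T := Matrix.fromBlocks 1 (-Y) 0 1) ?_ ?_
  · simp [Matrix.fromBlocks_multiply]
  · have hY : X + (B * Y - Y) + Y = B * Y + X := by abel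
    simp [glueMatrix, Matrix.fromBlocks_multiply, ← hY, add_comm]

lemma Represents.glueMatrix_mul (h : Represents f (glueMatrix B X)) (hP : IsUnit P)
    (hQ : IsUnit Q) (hPB : Commute P B) : Represents f (glueMatrix B (P * X * Q)) := by
  rw [Matrix.isUnit_iff_isUnit_det] at hP hQ
  have hBP : B * P⁻¹ = P⁻¹ * B := by
    rw [← Matrix.nonsing_inv_mul_cancel_left (A := P) (B * P⁻¹) hP, ← mul_assoc P, hPB.eq,
      Matrix.mul_nonsing_inv_cancel_right _ _ hP]
  refine h.conj (S := Matrix.fromBlocks P⁻¹ 0 0 Q) (T := Matrix.fromBlocks P 0 0 Q⁻¹) ?_ ?_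
  · simp [Matrix.fromBlocks_multiply, hP, hQ]
  · simp [glueMatrix, Matrix.fromBlocks_multiply, hBP, Matrix.mul_assoc, hP]

end Gluing

section NormalForms

variable {M : Type*} [AddCommGroup M] [Module ℤ M] {h : End ℤ M}

/-- The matrix of multiplication by `ω = exp (2πi/3)` in the basis `1, ω` of `ℤ[ω]`. -/
def omegaMatrix : Matrix (Fin 2) (Fin 2) ℤ := !![0, -1; 1, -1]

lemma hasInvariantGram_of_glueMatrix_neg_one_zero
    (hA : Represents h (glueMatrix (-1) (0 : Matrix (Fin 2) (Fin 2) ℤ))) :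
    HasInvariantGram h !![0, 1; 1, 0] :=
  (hA.reindex finSumFinEquiv).hasInvariantGram two_ne_zero
    !![1, 0, 0, 0, 0, 0; 0, 0, 0, 0, 0, 1]ᵀ !![1, 0, 0, 0, 0, 0; 0, 0, 0, 0, 0, 1]
    (by decide +kernel) (by decide +kernel) (by decide +kernel) (by decide +kernel)

lemma hasInvariantGram_of_glueMatrix_neg_one_single
    (hA : Represents h (glueMatrix (-1) !![1, 0; 0, 0])) :
    HasInvariantGram h !![0, 2; 2, 0] :=
  (hA.reindex finSumFinEquiv).hasInvariantGram two_ne_zero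
    !![1, 0, 0, 0, 0, 0; 0, 0, 1, 0, 0, 2]ᵀ !![1, 0, 0, 0, 0, 0; 0, 0, 1, 0, 0, 0]
    (by decide +kernel) (by decide +kernel) (by decide +kernel) (by decide +kernel)

lemma hasInvariantGram_of_glueMatrix_neg_one_one
    (hA : Represents h (glueMatrix (-1) (1 : Matrix (Fin 2) (Fin 2) ℤ))) :
    HasInvariantGram h !![2, 0; 0, -2] :=
  (hA.reindex finSumFinEquiv).hasInvariantGram two_ne_zero
    !![1, 0, 1, -1, 0, 2; 0, 0, 1, -1, 0, 2]ᵀ !![1, 0, 0, 0, 0, 0; -1, 0, 1, 0, 0, 0]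
    (by decide +kernel) (by decide +kernel) (by decide +kernel) (by decide +kernel)

lemma hasInvariantGram_of_glueMatrix_omegaMatrix_zero
    (hA : Represents h (glueMatrix omegaMatrix (0 : Matrix (Fin 2) (Fin 2) ℤ))) :
    HasInvariantGram h !![0, 1; 1, 0] :=
  (hA.reindex finSumFinEquiv).hasInvariantGram three_ne_zero
    !![1, 0, 0, 0, 0, 0; 0, 0, 0, 0, 0, 1]ᵀ !![1, 0, 0, 0, 0, 0; 0, 0, 0, 0, 0, 1]
    (by decide +kernel) (by decide +kernel) (by decide +kernel) (by decide +kernel)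

lemma hasInvariantGram_of_glueMatrix_omegaMatrix_single
    (hA : Represents h (glueMatrix omegaMatrix !![1, 0; 0, 0])) :
    HasInvariantGram h !![0, 3; 3, 0] :=
  (hA.reindex finSumFinEquiv).hasInvariantGram three_ne_zero
    !![1, 0, 0, 0, 0, 0; 0, 0, 2, 0, 1, 3]ᵀ !![1, 0, 0, 0, 0, 0; 0, 0, 0, 0, 1, 0]
    (by decide +kernel) (by decide +kernel) (by decide +kernel) (by decide +kernel)

lemma hasInvariantGram_of_quarterTurn
    (hA : Represents h !![0, -1, 0, 0; 1, 0, 0, 0; 0, 0, 0, -1; 0, 0, 1, 0]) :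
    HasInvariantGram h !![0, 1, 0, 0; 1, 0, 0, 0; 0, 0, -2, 0; 0, 0, 0, -2] :=
  hA.hasInvariantGram two_ne_zero
    !![1, 0, 0, 0, 0, 0; 0, 0, 0, 0, 0, 1; 0, 1, 0, 0, 1, 0; 0, 0, 1, -1, 0, 0]ᵀ
    !![1, 0, 0, 0, 0, 0; 0, 0, 0, 0, 0, 1; 0, 1, 0, 0, 0, 0; 0, 0, 1, 0, 0, 0]
    (by decide +kernel) (by decide +kernel) (by decide +kernel) (by decide +kernel)

lemma hasInvariantGram_of_eisenstein
    (hA : Represents h !![0, -1, 0, 0; 1, -1, 0, 0; 0, 0, 0, -1; 0, 0, 1, -1]) :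
    HasInvariantGram h !![0, 1, 0, 0; 1, 0, 0, 0; 0, 0, -2, -1; 0, 0, -1, -2] :=
  hA.hasInvariantGram three_ne_zero
    !![1, 0, 0, 0, 0, 0; 0, 0, 0, 0, 0, 1; 0, 0, 1, -1, 0, 0; 0, 1, 1, 0, 1, 0]ᵀ
    !![1, 0, 0, 0, 0, 0; 0, 0, 0, 0, 0, 1; 0, -1, 1, 0, 0, 0; 0, 1, 0, 0, 0, 0]
    (by decide +kernel) (by decide +kernel) (by decide +kernel) (by decide +kernel)

lemma hasInvariantGram_of_quintic
    (hA : Represents h !![0, 0, 0, -1; 1, 0, 0, -1; 0, 1, 0, -1; 0, 0, 1, -1]) :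
    HasInvariantGram h !![2, 1; 1, -2] :=
  hA.hasInvariantGram (p := 5) (by decide)
    !![1, 0, 1, 0, 0, 1; 0, 1, 0, 1, 1, 0]ᵀ !![1, 0, 0, 0, 0, 0; 0, 1, 0, 0, 0, 0]
    (by decide +kernel) (by decide +kernel) (by decide +kernel) (by decide +kernel)

end NormalForms

section GluingReduction

lemma exists_isUnit_mul_apply_eq_zero {R : Type*} [CommRing R] [IsDomain R] [IsPrincipalIdealRing R]
    (X : Matrix (Fin 2) (Fin 2) R) (i : Fin 2) :
    ∃ Q : Matrix (Fin 2) (Fin 2) R, IsUnit Q ∧ (X * Q) i 1 = 0 := by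
  classical
  let := IsBezout.toGCDDomain R
  obtain ⟨a, b, ha, hb, hab⟩ := extract_gcd (X i 0) (X i 1)
  obtain ⟨Q, hQa, hQb⟩ := ((gcd_isUnit_iff a b).1 hab).symm.neg_left.exists_SL2_col 1
  refine ⟨Q, (Matrix.isUnit_iff_isUnit_det _).2 (by simp), ?_⟩
  rw [Matrix.mul_apply, Fin.sum_univ_two, hQa, hQb]
  linear_combination -b * ha + a * hb

variable {M : Type*} [AddCommGroup M] [Module ℤ M] {h : End ℤ M}

lemma Represents.glueMatrix_neg_one_emod {X : Matrix (Fin 2) (Fin 2) ℤ}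
    (hA : Represents h (glueMatrix (-1) X)) : Represents h (glueMatrix (-1) (X.map (· % 2))) := by
  convert hA.glueMatrix_add (X.map (· / 2)) using 2
  ext i j
  simp only [Matrix.map_apply, Matrix.add_apply, Matrix.sub_apply, neg_one_mul, Matrix.neg_apply]
  omega

lemma Represents.exists_glueMatrix_neg_one_diagonal {X : Matrix (Fin 2) (Fin 2) ℤ}
    (hA : Represents h (glueMatrix (-1) X)) :
    ∃ a d : ℤ, Represents h (glueMatrix (-1) !![a, 0; 0, d]) := by
  have triangular : ∃ a c d : ℤ, Represents h (glueMatrix (-1) !![a, 0; c, d]) := by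
    obtain ⟨Q, hQ, hXQ⟩ := exists_isUnit_mul_apply_eq_zero X 0
    have hA' := hA.glueMatrix_mul isUnit_one hQ (Commute.one_left _)
    rw [one_mul, Matrix.eta_fin_two (X * Q), hXQ] at hA'
    exact ⟨_, _, _, hA'⟩
  obtain ⟨a, c, d, hA⟩ := triangular
  have hmod := hA.glueMatrix_neg_one_emod
  obtain hd | hd := Int.emod_two_eq_zero_or_one d
  · obtain ⟨P, hP, hPX⟩ := exists_isUnit_mul_apply_eq_zero !![a % 2, c % 2; 0, 0] 0
    refine ⟨(Pᵀ * !![a % 2, 0; c % 2, 0]) 0 0, 0, ?_⟩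
    convert hmod.glueMatrix_mul ((Matrix.isUnit_transpose P).2 hP) isUnit_one
      (Commute.one_right _).neg_right using 2
    ext i j
    fin_cases i <;> fin_cases j <;> simp_all [Matrix.mul_apply, mul_comm]
  · refine ⟨a % 2, 1, ?_⟩
    have hQ : IsUnit !![1, 0; -(c % 2), 1] := by simp [Matrix.isUnit_iff_isUnit_det]
    convert hmod.glueMatrix_mul isUnit_one hQ (Commute.one_left _) using 2
    ext i j
    fin_cases i <;> fin_cases j <;> simp [Matrix.mul_apply, hd]

lemma Represents.hasInvariantGram_of_glueMatrix_neg_one {X : Matrix (Fin 2) (Fin 2) ℤ}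
    (hA : Represents h (glueMatrix (-1) X)) :
    HasInvariantGram h !![0, 1; 1, 0] ∨ HasInvariantGram h !![0, 2; 2, 0] ∨
      HasInvariantGram h !![2, 0; 0, -2] := by
  obtain ⟨a, d, hA⟩ := hA.exists_glueMatrix_neg_one_diagonal
  have hmod : Represents h (glueMatrix (-1) !![a % 2, 0; 0, d % 2]) := by
    convert hA.glueMatrix_neg_one_emod using 2
    ext i j
    fin_cases i <;> fin_cases j <;> simp
  obtain ha | ha := Int.emod_two_eq_zero_or_one a <;>
    obtain hd | hd := Int.emod_two_eq_zero_or_one d <;> rw [ha, hd] at hmod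
  · refine .inl (hasInvariantGram_of_glueMatrix_neg_one_zero ?_)
    convert hmod using 2
    decide
  · have hswap : IsUnit (!![0, 1; 1, 0] : Matrix (Fin 2) (Fin 2) ℤ) := by
      simp [Matrix.isUnit_iff_isUnit_det]
    refine .inr (.inl (hasInvariantGram_of_glueMatrix_neg_one_single ?_))
    convert hmod.glueMatrix_mul hswap hswap (Commute.one_right _).neg_right using 2
    decide
  · exact .inr (.inl (hasInvariantGram_of_glueMatrix_neg_one_single hmod))
  · refine .inr (.inr (hasInvariantGram_of_glueMatrix_neg_one_one ?_))
    convert hmod using 2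
    exact Matrix.one_fin_two

-- `ω - 1` divides `3`: the correction `Y` encodes `(ω - 1) * (2 + ω) = -3`.
lemma Represents.glueMatrix_omegaMatrix_emod {a : ℤ}
    (hA : Represents h (glueMatrix omegaMatrix !![a, 0; 0, 0])) :
    Represents h (glueMatrix omegaMatrix !![a % 3, 0; 0, 0]) := by
  let Y : Matrix (Fin 2) (Fin 2) ℤ := !![2 * (a / 3), 0; a / 3, 0]
  have hY : omegaMatrix * Y - Y = !![-(3 * (a / 3)), 0; 0, 0] := by
    ext i j
    fin_cases i <;> fin_cases j <;> simp [omegaMatrix, Y] <;> ring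
  have ha : a + -(3 * (a / 3)) = a % 3 := by omega
  simpa [hY, ha] using hA.glueMatrix_add Y

lemma Represents.glueMatrix_omegaMatrix {X : Matrix (Fin 2) (Fin 2) ℤ}
    (hA : Represents h (glueMatrix omegaMatrix X)) :
    Represents h (glueMatrix omegaMatrix (0 : Matrix (Fin 2) (Fin 2) ℤ)) ∨
      Represents h (glueMatrix omegaMatrix !![1, 0; 0, 0]) := by
  have row : ∃ a b : ℤ, Represents h (glueMatrix omegaMatrix !![a, b; 0, 0]) := by
    refine ⟨X 0 0 + X 1 0, X 0 1 + X 1 1, ?_⟩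
    convert hA.glueMatrix_add !![-X 1 0, -X 1 1; 0, 0] using 2
    ext i j
    fin_cases i <;> fin_cases j <;> simp [omegaMatrix]
  have entry : ∃ a : ℤ, Represents h (glueMatrix omegaMatrix !![a, 0; 0, 0]) := by
    obtain ⟨a, b, hA⟩ := row
    obtain ⟨Q, hQ, hXQ⟩ := exists_isUnit_mul_apply_eq_zero !![a, b; 0, 0] 0
    have hA' := hA.glueMatrix_mul isUnit_one hQ (Commute.one_left _)
    rw [one_mul, Matrix.eta_fin_two (!![a, b; 0, 0] * Q), hXQ] at hA'
    refine ⟨(!![a, b; 0, 0] * Q) 0 0, ?_⟩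
    simpa [Matrix.mul_apply] using hA'
  obtain ⟨a, hA⟩ := entry
  have hmod := hA.glueMatrix_omegaMatrix_emod
  have : a % 3 = 0 ∨ a % 3 = 1 ∨ a % 3 = 2 := by omega
  obtain h0 | h1 | h2 := this
  · left
    convert hmod using 2
    ext i j
    fin_cases i <;> fin_cases j <;> simp [h0]
  · exact .inr (h1 ▸ hmod)
  · right
    have hneg : Represents h (glueMatrix omegaMatrix !![-a, 0; 0, 0]) := by
      convert hA.glueMatrix_mul isUnit_one.neg isUnit_one (Commute.one_left _).neg_left using 2
      simp
    have hnegmod : -a % 3 = 1 := by omega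
    exact hnegmod ▸ hneg.glueMatrix_omegaMatrix_emod

lemma Represents.hasInvariantGram_of_glueMatrix_omegaMatrix {X : Matrix (Fin 2) (Fin 2) ℤ}
    (hA : Represents h (glueMatrix omegaMatrix X)) :
    HasInvariantGram h !![0, 1; 1, 0] ∨ HasInvariantGram h !![0, 3; 3, 0] :=
  hA.glueMatrix_omegaMatrix.imp hasInvariantGram_of_glueMatrix_omegaMatrix_zero
    hasInvariantGram_of_glueMatrix_omegaMatrix_single

end GluingReduction

section PowerBasis

open Polynomial

/-- The companion matrix of a monic polynomial `P` of degree `d`: multiplication by `X` on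
`R[X] / (P)` in the basis `1, X, …, X ^ (d - 1)`. -/
def companion {R : Type*} [CommRing R] (P : R[X]) (d : ℕ) : Matrix (Fin d) (Fin d) R :=
  Matrix.of fun i j => if (j : ℕ) + 1 = d then -P.coeff i else if (i : ℕ) = j + 1 then 1 else 0

variable {R S M : Type*} [CommRing R] [IsDomain R] [CommRing S] [IsDomain S] [Algebra R S]
  [AddCommGroup M] [Module R M] [Module.IsTorsionFree R M] {f : End R M}

lemma eq_zero_or_eq_zero_of_algHom_apply_eq_zero [Algebra.IsAlgebraic R S] (φ : S →ₐ[R] End R M)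
    {s : S} {x : M} (h : φ s x = 0) : s = 0 ∨ x = 0 := by
  by_contra! hne
  obtain ⟨r, hr, t, ht⟩ := (Algebra.IsAlgebraic.isAlgebraic (R := R) s).exists_nonzero_dvd
    (mem_nonZeroDivisors_of_ne_zero hne.1)
  have hrx : r • x = 0 := by
    rw [← Module.algebraMap_end_apply R R M, ← φ.commutes, ht, mul_comm, map_mul,
      Module.End.mul_apply, h, map_zero]
  exact (smul_eq_zero.1 hrx).elim hr hne.2

lemma dim_le_finrank_of_aeval_minpoly_eq_zero [Module.Finite R M] [Nontrivial M]
    (pb : PowerBasis R S) (hf : aeval f (minpoly R pb.gen) = 0) : pb.dim ≤ finrank R M := by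
  have := pb.finite
  obtain ⟨x, hx⟩ := exists_ne (0 : M)
  have hinj : Function.Injective ((LinearMap.applyₗ x) ∘ₗ (pb.lift f hf).toLinearMap) := by
    refine (injective_iff_map_eq_zero _).2 fun s hs => ?_
    exact (eq_zero_or_eq_zero_of_algHom_apply_eq_zero (pb.lift f hf) hs).resolve_right hx
  exact pb.finrank ▸ LinearMap.finrank_le_finrank_of_injective hinj

lemma exists_represents_companion [Module.Finite R M] [IsPrincipalIdealRing S]
    (pb : PowerBasis R S) (hf : aeval f (minpoly R pb.gen) = 0) :
    ∃ m, Represents f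
      (Matrix.blockDiagonal fun _ : Fin m => companion (minpoly R pb.gen) pb.dim) := by
  have := pb.finite
  let φ : S →ₐ[R] End R M := pb.lift f hf
  let _ : Module S M := Module.compHom M φ.toRingHom
  have hsmul (s : S) (x : M) : s • x = φ s x := rfl
  have : IsScalarTower R S M := ⟨fun r s x => by
    rw [hsmul, hsmul, map_smul, LinearMap.smul_apply]⟩
  have : Module.Finite S M := Module.Finite.of_restrictScalars_finite R S M
  have : Module.IsTorsionFree S M := Module.IsTorsionFree.of_smul_eq_zero fun _ _ h =>
    eq_zero_or_eq_zero_of_algHom_apply_eq_zero φ h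
  have : Module.Free S M := Module.free_of_finite_type_torsion_free'
  let c := Module.finBasis S M
  refine ⟨_, pb.basis.smulTower c, ?_⟩
  have hcomp : Algebra.leftMulMatrix pb.basis pb.gen = companion (minpoly R pb.gen) pb.dim := by
    rw [pb.leftMulMatrix, pb.minpolyGen_eq, companion]
  ext ⟨i, k⟩ ⟨j, l⟩
  have happly : f (pb.basis j • c l) = (pb.gen * pb.basis j) • c l := by
    rw [mul_smul, hsmul pb.gen, pb.lift_gen]
  rw [LinearMap.toMatrix_apply, Basis.smulTower_apply, happly, Basis.smulTower_repr, map_smul,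
    c.repr_self, Matrix.blockDiagonal_apply, ← hcomp, Algebra.leftMulMatrix_eq_repr_mul]
  obtain rfl | hkl := eq_or_ne k l
  · simp
  · simp [hkl]

end PowerBasis

section Extension

open Polynomial

variable {R M : Type*} [CommRing R] [AddCommGroup M] [Module R M]

lemma coe_aeval_apply_of_coe_apply {h : End R M} {N : Submodule R M} {g : End R N}
    (hg : ∀ x, (g x : M) = h x) (P : R[X]) (x : N) : (aeval g P x : M) = aeval h P x := by
  induction P using Polynomial.induction_on' generalizing x with
  | add P Q hP hQ => simp [hP, hQ]
  | monomial n a =>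
    have hpow : ((g ^ n) x : M) = (h ^ n) x := by
      induction n with
      | zero => rfl
      | succ n ih => rw [pow_succ', pow_succ', Module.End.mul_apply, hg, ih, Module.End.mul_apply]
    simp [aeval_monomial, hpow]

lemma exists_end_ker_aeval (h : End R M) (P : R[X]) :
    ∃ g : End R (LinearMap.ker (aeval h P)), (∀ x, (g x : M) = h x) ∧ aeval g P = 0 := by
  have hcomm : Commute (aeval h P) h := by
    simpa using (Commute.all P X).map (aeval h)
  have hker (x : M) (hx : x ∈ LinearMap.ker (aeval h P)) : h x ∈ LinearMap.ker (aeval h P) := by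
    rw [LinearMap.mem_ker, ← Module.End.mul_apply, hcomm.eq, Module.End.mul_apply,
      LinearMap.mem_ker.1 hx, map_zero]
  exact ⟨h.restrict hker, fun _ => rfl, LinearMap.ext fun x => Subtype.ext
    ((coe_aeval_apply_of_coe_apply (fun _ => rfl) P x).trans x.2)⟩

lemma exists_represents_glueMatrix [IsDomain R] [Module.Finite R M]
    {h : End R M} (N : Submodule R M) [Module.Free R (M ⧸ N)] (hN : ∀ x, h x - x ∈ N)
    {g : End R N} (hg : ∀ x, (g x : M) = h x) {ι : Type*} [Fintype ι] [DecidableEq ι]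
    {B : Matrix ι ι R} (hB : Represents g B) :
    ∃ (s : ℕ) (X : Matrix ι (Fin s) R), Represents h (glueMatrix B X) := by
  obtain ⟨b, rfl⟩ := hB
  let c : Basis (ι ⊕ Fin _) R M := b.sumQuot (Module.finBasis R (M ⧸ N))
  refine ⟨_, Matrix.of fun i j => b.repr ⟨_, hN (c (.inr j))⟩ i, c, ?_⟩
  ext i j
  rw [LinearMap.toMatrix_apply]
  obtain j | j := j
  · have hcj : h (c (.inl j)) = g (b j) := by rw [hg, Basis.sumQuot_inl]
    rw [hcj]
    obtain i | i := i
    · rw [Basis.sumQuot_repr_inl, glueMatrix, Matrix.fromBlocks_apply₁₁,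
        LinearMap.toMatrix_apply]
    · exact Basis.sumQuot_repr_inr_of_mem _ _ _ (g (b j)).2 i
  · rw [← sub_add_cancel (h (c (.inr j))) (c (.inr j)), map_add, Finsupp.add_apply,
      c.repr_self]
    obtain i | i := i
    · rw [Basis.sumQuot_repr_inl_of_mem _ _ _ (hN _)]
      simp [glueMatrix]
    · rw [Basis.sumQuot_repr_inr_of_mem _ _ _ (hN _)]
      simp [glueMatrix, Finsupp.single_apply, Matrix.one_apply, eq_comm]

lemma exists_represents_glueMatrix_companion [IsDomain R] [IsPrincipalIdealRing R]
    [Module.Free R M] [Module.Finite R M] {S : Type*} [CommRing S] [IsDomain S] [Algebra R S]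
    [IsPrincipalIdealRing S] (pb : PowerBasis R S) {h : End R M}
    (hh : aeval h (minpoly R pb.gen * (X - 1)) = 0) :
    ∃ (m s : ℕ) (X : Matrix (Fin pb.dim × Fin m) (Fin s) R), Represents h
      (glueMatrix (Matrix.blockDiagonal fun _ => companion (minpoly R pb.gen) pb.dim) X) := by
  have : Module.Free R (M ⧸ LinearMap.ker (aeval h (minpoly R pb.gen))) :=
    Module.Free.of_equiv (aeval h (minpoly R pb.gen)).quotKerEquivRange.symm
  obtain ⟨g, hg, hg0⟩ := exists_end_ker_aeval h (minpoly R pb.gen)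
  obtain ⟨m, hm⟩ := exists_represents_companion pb hg0
  exact ⟨m, exists_represents_glueMatrix _ (fun x => by simpa using LinearMap.congr_fun hh x) hg hm⟩

lemma dim_le_finrank_of_aeval_minpoly_mul_X_sub_one_eq_zero [IsDomain R]
    [IsPrincipalIdealRing R] [Module.IsTorsionFree R M] [Module.Finite R M] {S : Type*}
    [CommRing S] [IsDomain S] [Algebra R S] (pb : PowerBasis R S) {h : End R M}
    (hh : aeval h (minpoly R pb.gen * (X - 1)) = 0) (h1 : h ≠ 1) : pb.dim ≤ finrank R M := by
  obtain ⟨g, -, hg0⟩ := exists_end_ker_aeval h (minpoly R pb.gen)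
  have : Nontrivial (LinearMap.ker (aeval h (minpoly R pb.gen))) := by
    obtain ⟨x, hx⟩ := DFunLike.ne_iff.1 (sub_ne_zero.2 h1)
    refine ⟨⟨⟨_, ?_⟩, 0, fun h0 => hx (congrArg Subtype.val h0)⟩⟩
    simpa using LinearMap.congr_fun hh x
  exact (dim_le_finrank_of_aeval_minpoly_eq_zero pb hg0).trans (Submodule.finrank_le _)

end Extension

section Involutions

lemma exists_represents_glueMatrix_neg_one {R M : Type*} [CommRing R] [IsDomain R]
    [IsPrincipalIdealRing R] [AddCommGroup M] [Module R M] [Module.Free R M] [Module.Finite R M]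
    {h : End R M} (hh : h * h = 1) :
    ∃ (m s : ℕ) (X : Matrix (Fin m) (Fin s) R), Represents h (glueMatrix (-1) X) := by
  have : Module.Free R (M ⧸ LinearMap.ker (h + 1)) :=
    Module.Free.of_equiv (h + 1).quotKerEquivRange.symm
  have hN (x : M) : h x - x ∈ LinearMap.ker (h + 1) := by
    have hhx : h (h x) = x := LinearMap.congr_fun hh x
    simp [hhx]
  have hg (x : LinearMap.ker (h + 1)) :
      (((-1 : End R (LinearMap.ker (h + 1))) x : LinearMap.ker (h + 1)) : M) = h x :=
    (eq_neg_of_add_eq_zero_left x.2).symm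
  refine ⟨_, exists_represents_glueMatrix _ hN hg ⟨Module.finBasis R _, ?_⟩⟩
  rw [map_neg, LinearMap.toMatrix_one]

variable {M : Type*} [AddCommGroup M] [Module ℤ M] [Module.Free ℤ M] [Module.Finite ℤ M]
  {h : End ℤ M}

lemma hasInvariantGram_of_mul_self_eq_one (hM : finrank ℤ M = 4) (hdet : LinearMap.det h = 1)
    (hh : h * h = 1) (h1 : h ≠ 1) (h1' : h ≠ -1) :
    HasInvariantGram h !![0, 1; 1, 0] ∨ HasInvariantGram h !![0, 2; 2, 0] ∨
      HasInvariantGram h !![2, 0; 0, -2] := by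
  obtain ⟨m, s, X, hA⟩ := exists_represents_glueMatrix_neg_one hh
  have hms : m + s = 4 := by simpa [hA.finrank_eq] using hM
  have hm : Even m := by
    have hdetA := hA.det_eq
    rw [hdet, glueMatrix, Matrix.det_fromBlocks_zero₂₁, Matrix.det_neg] at hdetA
    simpa [neg_one_pow_eq_one_iff_even] using hdetA.symm
  have hm0 : m ≠ 0 := by
    rintro rfl
    exact h1 hA.eq_one_of_glueMatrix
  have hs0 : s ≠ 0 := by
    rintro rfl
    exact h1' hA.of_glueMatrix.eq_neg_one
  obtain ⟨rfl, rfl⟩ : m = 2 ∧ s = 2 := by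
    obtain ⟨k, rfl⟩ := hm
    omega
  exact hA.hasInvariantGram_of_glueMatrix_neg_one

end Involutions

section Cyclotomic

open Polynomial NumberField

lemma exists_powerBasis_cyclotomicField (n : ℕ) [NeZero n] :
    ∃ pb : PowerBasis ℤ (𝓞 (CyclotomicField n ℚ)),
      minpoly ℤ pb.gen = cyclotomic n ℤ ∧ pb.dim = n.totient := by
  have : IsCyclotomicExtension {n} ℚ (CyclotomicField n ℚ) :=
    CyclotomicField.isCyclotomicExtension n ℚ
  have hζ := IsCyclotomicExtension.zeta_spec n ℚ (CyclotomicField n ℚ)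
  refine ⟨hζ.integralPowerBasis, ?_, hζ.integralPowerBasis_dim⟩
  rw [hζ.integralPowerBasis_gen, cyclotomic_eq_minpoly hζ (NeZero.pos n),
    ← RingOfIntegers.minpoly_coe]
  rfl

lemma isPrincipalIdealRing_of_isCyclotomicExtension_four (K : Type*) [Field K] [NumberField K]
    [IsCyclotomicExtension {4} ℚ K] : IsPrincipalIdealRing (𝓞 K) := by
  have : IsCyclotomicExtension {2 ^ (1 + 1)} ℚ K := ‹IsCyclotomicExtension {4} ℚ K›
  have htot : Nat.totient 4 = 2 := by decide
  have hdiscr : |discr K| = 4 := by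
    rw [IsCyclotomicExtension.Rat.discr_prime_pow_succ 2 1 K]
    norm_num
  have hfinrank : finrank ℚ K = 2 := by
    rw [IsCyclotomicExtension.finrank (n := 4) K (cyclotomic.irreducible_rat (by norm_num)), htot]
  have hplaces : InfinitePlace.nrComplexPlaces K = 1 := by
    rw [IsCyclotomicExtension.Rat.nrComplexPlaces_eq_totient_div_two 4, htot]
  apply RingOfIntegers.isPrincipalIdealRing_of_abs_discr_lt
  rw [hdiscr, hfinrank, hplaces]
  calc ((4 : ℤ) : ℝ) < (2 * (3 / 4) ^ 1 * ((2 : ℕ) ^ 2 / (Nat.factorial 2 : ℕ))) ^ 2 := by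
        norm_num [Nat.factorial]
    _ < _ := by
        gcongr
        exact Real.pi_gt_three

lemma cyclotomic_four : cyclotomic 4 ℤ = X ^ 2 + 1 := by
  have h : cyclotomic (2 ^ (1 + 1)) ℤ = _ := cyclotomic_prime_pow_eq_geom_sum Nat.prime_two
  simpa [Finset.sum_range_succ, add_comm] using h

lemma companion_cyclotomic_four : companion (cyclotomic 4 ℤ) 2 = !![0, -1; 1, 0] := by
  ext i j
  fin_cases i <;> fin_cases j <;> simp [companion, cyclotomic_four, coeff_one]

lemma companion_cyclotomic_prime {p d : ℕ} (hp : p.Prime) (hd : p = d + 1) :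
    companion (cyclotomic p ℤ) d =
      Matrix.of fun i j : Fin d =>
        if (j : ℕ) + 1 = d then -1 else if (i : ℕ) = j + 1 then 1 else 0 := by
  have := Fact.mk hp
  ext i j
  have hi : (i : ℕ) < p := by omega
  simp [companion, cyclotomic_prime, coeff_X_pow, hi]

variable {M : Type*} [AddCommGroup M] [Module ℤ M] [Module.Free ℤ M] [Module.Finite ℤ M]
  {h : End ℤ M} {p : ℕ}

lemma exists_represents_glueMatrix_of_pow_eq_one {d : ℕ} [NeZero p]
    [IsPrincipalIdealRing (𝓞 (CyclotomicField p ℚ))] (hp : p.Prime) (hd : p = d + 1)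
    (hh : h ^ p = 1) : ∃ (m s : ℕ) (X : Matrix (Fin d × Fin m) (Fin s) ℤ), Represents h
      (glueMatrix (Matrix.blockDiagonal fun _ => companion (cyclotomic p ℤ) d) X) := by
  have := Fact.mk hp
  obtain ⟨pb, hmin, hdim⟩ := exists_powerBasis_cyclotomicField p
  obtain rfl : pb.dim = d := by rw [hdim, Nat.totient_prime hp, hd, Nat.add_sub_cancel]
  rw [← hmin]
  refine exists_represents_glueMatrix_companion pb ?_
  rw [hmin, cyclotomic_prime_mul_X_sub_one]
  simp [hh]

lemma prime_le_finrank_add_one (hp : p.Prime) (hh : h ^ p = 1) (h1 : h ≠ 1) :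
    p ≤ finrank ℤ M + 1 := by
  have := Fact.mk hp
  obtain ⟨pb, hmin, hdim⟩ := exists_powerBasis_cyclotomicField p
  have hle := dim_le_finrank_of_aeval_minpoly_mul_X_sub_one_eq_zero pb (h := h)
    (by rw [hmin, cyclotomic_prime_mul_X_sub_one]; simp [hh]) h1
  rw [hdim, Nat.totient_prime hp] at hle
  omega

lemma hasInvariantGram_of_mul_self_eq_neg_one (hM : finrank ℤ M = 4) (hh : h * h = -1) :
    HasInvariantGram h !![0, 1, 0, 0; 1, 0, 0, 0; 0, 0, -2, 0; 0, 0, 0, -2] := by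
  have : IsCyclotomicExtension {4} ℚ (CyclotomicField 4 ℚ) :=
    CyclotomicField.isCyclotomicExtension 4 ℚ
  have := isPrincipalIdealRing_of_isCyclotomicExtension_four (CyclotomicField 4 ℚ)
  have htot : Nat.totient 4 = 2 := by decide
  obtain ⟨pb, hmin, hdim⟩ := exists_powerBasis_cyclotomicField 4
  obtain ⟨m, hA⟩ := exists_represents_companion pb (f := h)
    (by rw [hmin, cyclotomic_four]; simp [sq, hh])
  rw [hmin, hdim, htot, companion_cyclotomic_four] at hA
  obtain rfl : m = 2 := by
    have := hA.finrank_eq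
    simp only [Fintype.card_prod, Fintype.card_fin] at this
    omega
  refine hasInvariantGram_of_quarterTurn ?_
  convert hA.reindex ((Equiv.prodComm _ _).trans finProdFinEquiv) using 1
  decide

lemma hasInvariantGram_of_pow_three_eq_one (hM : finrank ℤ M = 4) (hh : h ^ 3 = 1)
    (h1 : h ≠ 1) :
    HasInvariantGram h !![0, 1; 1, 0] ∨ HasInvariantGram h !![0, 3; 3, 0] ∨
      HasInvariantGram h !![0, 1, 0, 0; 1, 0, 0, 0; 0, 0, -2, -1; 0, 0, -1, -2] := by
  have : IsCyclotomicExtension {3} ℚ (CyclotomicField 3 ℚ) :=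
    CyclotomicField.isCyclotomicExtension 3 ℚ
  have := IsCyclotomicExtension.Rat.three_pid (CyclotomicField 3 ℚ)
  obtain ⟨m, s, X, hA⟩ :=
    exists_represents_glueMatrix_of_pow_eq_one (d := 2) Nat.prime_three rfl hh
  rw [companion_cyclotomic_prime Nat.prime_three rfl] at hA
  have hms : 2 * m + s = 4 := by simpa [hA.finrank_eq] using hM
  have hm0 : m ≠ 0 := by
    rintro rfl
    exact h1 hA.eq_one_of_glueMatrix
  obtain ⟨rfl, rfl⟩ | ⟨rfl, rfl⟩ : m = 1 ∧ s = 2 ∨ m = 2 ∧ s = 0 := by omega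
  · have hA' := hA.reindex_glueMatrix (Equiv.prodUnique _ _) (Equiv.refl _)
    have homega : Matrix.reindex (Equiv.prodUnique (Fin 2) (Fin 1)) (Equiv.prodUnique _ _)
        (Matrix.blockDiagonal fun _ => Matrix.of fun i j : Fin 2 =>
          if (j : ℕ) + 1 = 2 then -1 else if (i : ℕ) = j + 1 then 1 else 0) = omegaMatrix := by
      decide
    rw [homega] at hA'
    obtain h | h := hA'.hasInvariantGram_of_glueMatrix_omegaMatrix
    exacts [.inl h, .inr (.inl h)]
  · refine .inr (.inr (hasInvariantGram_of_eisenstein ?_))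
    convert hA.of_glueMatrix.reindex ((Equiv.prodComm _ _).trans finProdFinEquiv) using 1
    decide

lemma hasInvariantGram_of_pow_five_eq_one (hM : finrank ℤ M = 4) (hh : h ^ 5 = 1)
    (h1 : h ≠ 1) : HasInvariantGram h !![2, 1; 1, -2] := by
  have : IsCyclotomicExtension {5} ℚ (CyclotomicField 5 ℚ) :=
    CyclotomicField.isCyclotomicExtension 5 ℚ
  have := IsCyclotomicExtension.Rat.five_pid (CyclotomicField 5 ℚ)
  obtain ⟨m, s, X, hA⟩ :=
    exists_represents_glueMatrix_of_pow_eq_one (d := 4) Nat.prime_five rfl hh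
  rw [companion_cyclotomic_prime Nat.prime_five rfl] at hA
  have hms : 4 * m + s = 4 := by simpa [hA.finrank_eq] using hM
  have hm0 : m ≠ 0 := by
    rintro rfl
    exact h1 hA.eq_one_of_glueMatrix
  obtain ⟨rfl, rfl⟩ : m = 1 ∧ s = 0 := by omega
  refine hasInvariantGram_of_quintic ?_
  convert hA.of_glueMatrix.reindex (Equiv.prodUnique _ _) using 1
  decide

end Cyclotomic

section PrimeOrder

variable {M : Type*} [AddCommGroup M] [Module ℤ M] {g : End ℤ M} {p : ℕ}

lemma HasInvariantGram.of_neg {n : ℕ} {G : Matrix (Fin n) (Fin n) ℤ}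
    (hg : HasInvariantGram (-g) G) : HasInvariantGram g G := by
  simpa only [HasInvariantGram, extPowMap_two_neg] using hg

variable [Module.Free ℤ M]

lemma exists_pow_eq_one_of_extPowMap_two_pow_eq_one (hM : 2 < finrank ℤ M) (hp : Odd p)
    (hg : extPowMap 2 (g ^ p) = (1 : End ℤ (⋀[ℤ]^2 M)))
    (hg1 : extPowMap 2 g ≠ (1 : End ℤ (⋀[ℤ]^2 M))) :
    ∃ h : End ℤ M, (h = g ∨ h = -g) ∧ h ^ p = 1 ∧ h ≠ 1 := by
  have hone : extPowMap 2 (1 : End ℤ M) = (1 : End ℤ (⋀[ℤ]^2 M)) := extPowMap_one 2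
  obtain hgp | hgp := eq_one_or_eq_neg_one_of_extPowMap_two_eq_one hM hg
  · refine ⟨g, .inl rfl, hgp, ?_⟩
    rintro rfl
    exact hg1 hone
  · refine ⟨-g, .inr rfl, by rw [hp.neg_pow, hgp, neg_neg], fun hneg => hg1 ?_⟩
    rw [← extPowMap_two_neg, hneg, hone]

variable [Module.Finite ℤ M]

lemma hasInvariantGram_of_extPowMap_two_sq_eq_one (hM : finrank ℤ M = 4)
    (hdet : LinearMap.det g = 1) (hg : extPowMap 2 (g ^ 2) = (1 : End ℤ (⋀[ℤ]^2 M)))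
    (hg1 : extPowMap 2 g ≠ (1 : End ℤ (⋀[ℤ]^2 M))) :
    HasInvariantGram g !![0, 1; 1, 0] ∨ HasInvariantGram g !![0, 2; 2, 0] ∨
      HasInvariantGram g !![2, 0; 0, -2] ∨
      HasInvariantGram g !![0, 1, 0, 0; 1, 0, 0, 0; 0, 0, -2, 0; 0, 0, 0, -2] := by
  have hone : extPowMap 2 (1 : End ℤ M) = (1 : End ℤ (⋀[ℤ]^2 M)) := extPowMap_one 2
  rw [sq] at hg
  obtain hgg | hgg := eq_one_or_eq_neg_one_of_extPowMap_two_eq_one (by omega) hg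
  · have h1 : g ≠ 1 := by
      rintro rfl
      exact hg1 hone
    have h1' : g ≠ -1 := by
      rintro rfl
      exact hg1 ((extPowMap_two_neg 1).trans hone)
    have := hasInvariantGram_of_mul_self_eq_one hM hdet hgg h1 h1'
    tauto
  · exact .inr (.inr (.inr (hasInvariantGram_of_mul_self_eq_neg_one hM hgg)))

lemma eq_three_or_eq_five_of_pow_eq_one (hM : finrank ℤ M = 4) (hp : p.Prime) (hodd : Odd p)
    {h : End ℤ M} (hh : h ^ p = 1) (h1 : h ≠ 1) : p = 3 ∨ p = 5 := by
  have hle : p ≤ 5 := by simpa only [hM] using prime_le_finrank_add_one hp hh h1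
  have := hp.two_le
  obtain ⟨k, rfl⟩ := hodd
  omega

lemma hasInvariantGram_of_orderOf_eq_prime (hM : finrank ℤ M = 4) (hdet : LinearMap.det g = 1)
    (hp : p.Prime) (hordp : orderOf (extPowMap 2 g : End ℤ (⋀[ℤ]^2 M)) = p) :
    (p = 2 ∧ (HasInvariantGram g !![0, 1; 1, 0] ∨ HasInvariantGram g !![0, 2; 2, 0] ∨
      HasInvariantGram g !![2, 0; 0, -2] ∨
      HasInvariantGram g !![0, 1, 0, 0; 1, 0, 0, 0; 0, 0, -2, 0; 0, 0, 0, -2])) ∨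
    (p = 3 ∧ (HasInvariantGram g !![0, 1; 1, 0] ∨ HasInvariantGram g !![0, 3; 3, 0] ∨
      HasInvariantGram g !![0, 1, 0, 0; 1, 0, 0, 0; 0, 0, -2, -1; 0, 0, -1, -2])) ∨
    (p = 5 ∧ HasInvariantGram g !![2, 1; 1, -2]) := by
  have hpow : extPowMap 2 (g ^ p) = (1 : End ℤ (⋀[ℤ]^2 M)) := by
    rw [extPowMap_pow, ← hordp]
    exact pow_orderOf_eq_one _
  have hne : extPowMap 2 g ≠ (1 : End ℤ (⋀[ℤ]^2 M)) := fun h =>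
    hp.ne_one (hordp.symm.trans (orderOf_eq_one_iff.2 h))
  obtain rfl | hodd := hp.eq_two_or_odd'
  · exact .inl ⟨rfl, hasInvariantGram_of_extPowMap_two_sq_eq_one hM hdet hpow hne⟩
  obtain ⟨h, hhg, hh, h1⟩ :=
    exists_pow_eq_one_of_extPowMap_two_pow_eq_one (by omega) hodd hpow hne
  have transfer {n : ℕ} {G : Matrix (Fin n) (Fin n) ℤ} (hG : HasInvariantGram h G) :
      HasInvariantGram g G := by
    obtain rfl | rfl := hhg
    exacts [hG, hG.of_neg]
  obtain rfl | rfl := eq_three_or_eq_five_of_pow_eq_one hM hp hodd hh h1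
  · exact .inr (.inl ⟨rfl, (hasInvariantGram_of_pow_three_eq_one hM hh h1).imp transfer
      (.imp transfer transfer)⟩)
  · exact .inr (.inr ⟨rfl, transfer (hasInvariantGram_of_pow_five_eq_one hM hh h1)⟩)

end PrimeOrder

end WedgeLattice

namespace IsComplexTorusLattice

variable {Λ : Submodule ℤ (ℂ × ℂ)} {σ : (ℂ × ℂ) ≃ₗ[ℂ] (ℂ × ℂ)}

lemma nonempty_basis (hΛ : IsComplexTorusLattice Λ) : Nonempty (Basis (Fin 4) ℤ Λ) := by
  obtain ⟨b, rfl⟩ := hΛ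
  exact ⟨b.restrictScalars ℤ⟩

lemma free (hΛ : IsComplexTorusLattice Λ) : Module.Free ℤ Λ :=
  hΛ.nonempty_basis.elim Module.Free.of_basis

lemma finrank_eq_four (hΛ : IsComplexTorusLattice Λ) : finrank ℤ Λ = 4 :=
  hΛ.nonempty_basis.elim finrank_eq_card_basis

lemma intCast_det_latRestrict (hΛ : IsComplexTorusLattice Λ) (hσ : PreservesLattice σ Λ) :
    ((LinearMap.det (latRestrict σ Λ hσ).toLinearMap : ℤ) : ℝ) =
      Complex.normSq (LinearMap.det (σ : (ℂ × ℂ) →ₗ[ℂ] (ℂ × ℂ))) := by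
  obtain ⟨b, rfl⟩ := hΛ
  let e := b.restrictScalars ℤ
  have hmat : (LinearMap.toMatrix e e (latRestrict σ _ hσ).toLinearMap).map (Int.cast : ℤ → ℝ) =
      LinearMap.toMatrix b b ((σ : (ℂ × ℂ) →ₗ[ℂ] (ℂ × ℂ)).restrictScalars ℝ) := by
    ext i j
    simp only [Matrix.map_apply, LinearMap.toMatrix_apply]
    refine (b.restrictScalars_repr_apply ℤ _ i).trans ?_
    exact congrArg (fun x => b.repr (σ x) i) (b.restrictScalars_apply ℤ j)
  rw [← Algebra.norm_complex_apply, ← LinearMap.det_restrictScalars,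
    ← LinearMap.det_toMatrix e, ← LinearMap.det_toMatrix b, ← hmat]
  exact (Int.castRingHom ℝ).map_det _

lemma det_latRestrict (hΛ : IsComplexTorusLattice Λ) (hσ : PreservesLattice σ Λ) :
    LinearMap.det (latRestrict σ Λ hσ).toLinearMap = 1 := by
  have hnonneg : 0 ≤ LinearMap.det (latRestrict σ Λ hσ).toLinearMap := by
    exact_mod_cast hΛ.intCast_det_latRestrict hσ ▸ Complex.normSq_nonneg _
  have hunit := (latRestrict σ Λ hσ).isUnit_det'
  obtain h | h := Int.isUnit_iff.1 hunit
  · exact h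
  · omega

end IsComplexTorusLattice

theorem stmt_6_general {M : Type*} [AddCommGroup M] [Module ℤ M] [Module.Free ℤ M]
    (hM : finrank ℤ M = 4) (g : End ℤ M) (hdet : LinearMap.det g = 1) {p : ℕ} (hp : p.Prime)
    (hordp : orderOf (extPowMap 2 g : End ℤ (⋀[ℤ]^2 M)) = p) :
    ∃ vol : ⋀[ℤ]^4 M, Submodule.span ℤ {vol} = ⊤ ∧
      ∃ b : ⋀[ℤ]^2 M →ₗ[ℤ] ⋀[ℤ]^2 M →ₗ[ℤ] ℤ,
        (∀ x y : ⋀[ℤ]^2 M, (x : ExteriorAlgebra ℤ M) * (y : ExteriorAlgebra ℤ M) =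
          b x y • (vol : ExteriorAlgebra ℤ M)) ∧
        let T := LinearMap.ker (extPowMap 2 g - LinearMap.id)
        (p = 2 ∧
            (HasGramMatrix b T !![0, 1; 1, 0] ∨ HasGramMatrix b T !![0, 2; 2, 0] ∨
              HasGramMatrix b T !![2, 0; 0, -2] ∨
              HasGramMatrix b T !![0, 1, 0, 0; 1, 0, 0, 0; 0, 0, -2, 0; 0, 0, 0, -2])) ∨
          (p = 3 ∧
            (HasGramMatrix b T !![0, 1; 1, 0] ∨ HasGramMatrix b T !![0, 3; 3, 0] ∨
              HasGramMatrix b T !![0, 1, 0, 0; 1, 0, 0, 0; 0, 0, -2, -1; 0, 0, -1, -2])) ∨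
          (p = 5 ∧ HasGramMatrix b T !![2, 1; 1, -2]) := by
  have : Module.Finite ℤ M := Module.finite_of_finrank_pos (by omega)
  have hgram := WedgeLattice.hasInvariantGram_of_orderOf_eq_prime hM hdet hp hordp
  simp only [WedgeLattice.HasInvariantGram, ← exists_or, ← exists_and_left] at hgram
  obtain ⟨e, he⟩ := hgram
  exact ⟨WedgeLattice.volume e, WedgeLattice.span_volume e, WedgeLattice.wedgeForm e,
    WedgeLattice.mul_eq_wedgeForm_smul_volume e, he⟩

/-- Classification of invariant lattices of non-symplectic automorphisms of prime order of
`2`-tori: `T(G_σ)` is isometric to `U`, `U(2)`, `⟨2⟩⊕⟨-2⟩` or `U⊕⟨-2⟩⊕⟨-2⟩` if `p = 2`,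
to `U`, `U(3)` or `U⊕A₂(-1)` if `p = 3`, and to `H₅` if `p = 5`. -/
theorem stmt_6 (Λ : Submodule ℤ (ℂ × ℂ)) (hΛ : IsComplexTorusLattice Λ)
    (σ : (ℂ × ℂ) ≃ₗ[ℂ] (ℂ × ℂ)) (hord : IsOfFinOrder σ) (hσΛ : PreservesLattice σ Λ)
    (hns : LinearMap.det (σ : (ℂ × ℂ) →ₗ[ℂ] (ℂ × ℂ)) ≠ 1)
    (p : ℕ) (hp : p.Prime) (hordp : orderOf (extSq σ Λ hσΛ) = p) :
    ∃ vol : ⋀[ℤ]^4 ↥Λ, Submodule.span ℤ {vol} = ⊤ ∧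
      ∃ b : ⋀[ℤ]^2 ↥Λ →ₗ[ℤ] ⋀[ℤ]^2 ↥Λ →ₗ[ℤ] ℤ, IsWedgeForm Λ vol b ∧
        ((p = 2 ∧
            (HasGramMatrix b (invLat σ Λ hσΛ) !![0, 1; 1, 0] ∨
             HasGramMatrix b (invLat σ Λ hσΛ) !![0, 2; 2, 0] ∨
             HasGramMatrix b (invLat σ Λ hσΛ) !![2, 0; 0, -2] ∨
             HasGramMatrix b (invLat σ Λ hσΛ)
               !![0, 1, 0, 0; 1, 0, 0, 0; 0, 0, -2, 0; 0, 0, 0, -2])) ∨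
         (p = 3 ∧
            (HasGramMatrix b (invLat σ Λ hσΛ) !![0, 1; 1, 0] ∨
             HasGramMatrix b (invLat σ Λ hσΛ) !![0, 3; 3, 0] ∨
             HasGramMatrix b (invLat σ Λ hσΛ)
               !![0, 1, 0, 0; 1, 0, 0, 0; 0, 0, -2, -1; 0, 0, -1, -2])) ∨
         (p = 5 ∧ HasGramMatrix b (invLat σ Λ hσΛ) !![2, 1; 1, -2])) := by
  have := hΛ.free
  exact stmt_6_general hΛ.finrank_eq_four _ (hΛ.det_latRestrict hσΛ) hp hordp
end
end

section
/- Let Λ₁ and Λ₂ be ℤ-lattices in ℂ (discrete rank-2 subgroups spanning ℂ over ℝ), let Λ = Λ₁ × Λ₂ ⊆ ℂ², and let σ be the ℂ-linear automorphism σ(z,w) = (z, −w) of ℂ². Then σ(Λ) = Λ, σ is non-symplectic of order 2, and for any generator vol of ⋀⁴Λ the fixed submodule {x ∈ ⋀²Λ : ⋀²(σ|_Λ)(x) = x}, with the restriction of the wedge form determined by vol, is isometric to the hyperbolic plane U. -/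
set_option synthInstance.maxHeartbeats 1000000
set_option maxHeartbeats 1000000

open ExteriorAlgebra Module Matrix

noncomputable section

/-!
In the basis of `Λ` obtained from bases of `Λ₁` and `Λ₂`, the involution `σ` is
`diag(1, 1, -1, -1)`, so `⋀²σ` is diagonal with entry `∏ i ∈ s, εᵢ` on the wedge product of the
basis vectors indexed by `s`. That entry is `1` only for `u = e₀ ∧ e₁` and `w = e₂ ∧ e₃`, and
`-1` otherwise, so `u` and `w` form a basis of the invariant lattice. They are isotropic because
`u ∧ u` and `w ∧ w` have repeated factors, while `u ∧ w = w ∧ u` generates `⋀⁴Λ` and hence is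
`±vol`. Replacing `w` by `±w` gives the Gram matrix of `U`.
-/

section DiagonalEndomorphism

variable {R M I : Type*} [CommRing R] [AddCommGroup M] [Module R M] {B : Basis I R M}
  {g : M →ₗ[R] M} {μ : I → R}

lemma repr_apply_of_diagonal (hg : ∀ i, g (B i) = μ i • B i) (x : M) (i : I) :
    B.repr (g x) i = μ i * B.repr x i := by
  suffices h : B.coord i ∘ₗ g = μ i • B.coord i from LinearMap.congr_fun h x
  refine B.ext fun j => ?_
  obtain rfl | hij := eq_or_ne j i <;> simp [*]

lemma ker_sub_id_eq_span_of_diagonal [NoZeroDivisors R] (hg : ∀ i, g (B i) = μ i • B i) :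
    LinearMap.ker (g - LinearMap.id) = Submodule.span R (B '' {i | μ i = 1}) := by
  ext x
  have hfix (i : I) : B.repr (g x) i = B.repr x i ↔ B.repr x i ≠ 0 → μ i = 1 := by
    rw [repr_apply_of_diagonal hg, mul_left_eq_self₀, or_comm, or_iff_not_imp_left]
  rw [LinearMap.mem_ker, LinearMap.sub_apply, LinearMap.id_apply, sub_eq_zero, B.ext_elem_iff,
    B.mem_span_image]
  simp only [hfix, Set.subset_def, Finset.mem_coe, Finsupp.mem_support_iff, Set.mem_ofPred_eq]

lemma exists_basis_ker_sub_id_of_diagonal [NoZeroDivisors R] {J : Type*} {f : J → I}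
    (hf : Function.Injective f) (hg : ∀ i, g (B i) = μ i • B i)
    (hμ : ∀ i, μ i = 1 ↔ i ∈ Set.range f) :
    ∃ v : Basis J R (LinearMap.ker (g - LinearMap.id)), ∀ j, (v j : M) = B (f j) := by
  have hker : Submodule.span R (Set.range (B ∘ f)) = LinearMap.ker (g - LinearMap.id) := by
    rw [ker_sub_id_eq_span_of_diagonal hg, Set.range_comp]
    exact congrArg (fun S => Submodule.span R (B '' S)) (Set.ext fun i => (hμ i).symm)
  refine ⟨(Basis.span (B.linearIndependent.comp f hf)).map (LinearEquiv.ofEq _ _ hker),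
    fun j => ?_⟩
  rw [Basis.map_apply, LinearEquiv.coe_ofEq_apply]
  exact congrArg Subtype.val (Basis.span_apply _ j)

end DiagonalEndomorphism

lemma smul_left_injective_of_span_singleton_eq_top {R M : Type*} [CommRing R] [AddCommGroup M]
    [Module R M] {v : M} (hM : finrank R M = 1) (hv : Submodule.span R {v} = ⊤) :
    Function.Injective fun c : R => c • v := by
  have hli : LinearIndependent R fun _ : Unit => v :=
    linearIndependent_of_top_le_span_of_card_eq_finrank (by rw [Set.range_const, hv]) hM.symm
  simpa using hli.smul_left_injective ()

section ExteriorPower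

variable {R M I : Type*} [CommRing R] [AddCommGroup M] [Module R M] [LinearOrder I] {n : ℕ}

lemma extPowMap_basis_of_diagonal {f : M →ₗ[R] M} {e : Basis I R M} {ε : I → R}
    (hf : ∀ i, f (e i) = ε i • e i) (s : Set.powersetCard I n) :
    extPowMap n f (e.exteriorPower n s) = (∏ i ∈ (s : Finset I), ε i) • e.exteriorPower n s := by
  have hprod : ∏ i ∈ (s : Finset I), ε i = ∏ i, ε (Set.powersetCard.ofFinEmbEquiv.symm s i) := by
    rw [← Finset.map_orderEmbOfFin_univ (s : Finset I) s.2, Finset.prod_map]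
    rfl
  rw [exteriorPower.basis_apply, hprod]
  apply Subtype.ext
  change ExteriorAlgebra.map f (ExteriorAlgebra.ιMulti R n _) = _
  rw [ExteriorAlgebra.map_apply_ιMulti]
  simp only [Function.comp_def, hf]
  exact AlternatingMap.map_smul_univ _ _ _

lemma span_exteriorPower_basis_singleton_eq_top [Fintype I] (e : Basis I R M)
    (hn : Fintype.card I = n) (s : Set.powersetCard I n) :
    Submodule.span R {e.exteriorPower n s} = ⊤ := by
  have eq_univ (t : Set.powersetCard I n) : (t : Finset I) = Finset.univ :=
    (Finset.card_eq_iff_eq_univ _).1 (t.2.trans hn.symm)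
  have hs (t : Set.powersetCard I n) : t = s := Subtype.ext ((eq_univ t).trans (eq_univ s).symm)
  have : Unique (Set.powersetCard I n) := ⟨⟨s⟩, hs⟩
  rw [← (e.exteriorPower n).span_eq, Set.range_unique, ← hs default]

lemma commute_ι_mul_ι (a b : M) (x : ExteriorAlgebra R M) : Commute (ι R a * ι R b) x := by
  have anticomm (c d : M) : ι R c * ι R d = -(ι R d * ι R c) :=
    eq_neg_of_add_eq_zero_left (ExteriorAlgebra.ι_add_mul_swap c d)
  induction x using ExteriorAlgebra.induction with
  | algebraMap r => exact (Algebra.commutes r _).symm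
  | ι c =>
    calc ι R a * ι R b * ι R c = -(ι R a * ι R c * ι R b) := by
          rw [mul_assoc, anticomm b c, mul_neg, mul_assoc]
      _ = ι R c * (ι R a * ι R b) := by rw [anticomm a c, neg_mul, neg_neg, mul_assoc]
  | mul x y hx hy => exact hx.mul_right hy
  | add x y hx hy => exact hx.add_right hy

lemma exteriorPower_le_center_of_even (hn : Even n) :
    ⋀[R]^n M ≤ Subalgebra.toSubmodule (Subalgebra.center R (ExteriorAlgebra R M)) := by
  have two_le : ⋀[R]^2 M ≤ Subalgebra.toSubmodule (Subalgebra.center R (ExteriorAlgebra R M)) := by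
    rw [exteriorPower, pow_two, Submodule.mul_le]
    rintro _ ⟨a, rfl⟩ _ ⟨b, rfl⟩
    exact (Subalgebra.mem_center_iff (R := R)).2 fun x => (commute_ι_mul_ι a b x).symm
  obtain ⟨k, rfl⟩ := hn.exists_two_nsmul
  rw [exteriorPower, smul_eq_mul, pow_mul]
  induction k with
  | zero => exact Submodule.one_le.2 (one_mem (Subalgebra.center R (ExteriorAlgebra R M)))
  | succ k ih =>
    rw [pow_succ]
    exact (mul_le_mul' (ih ⟨k, two_mul k ▸ rfl⟩) two_le).trans
      (Subalgebra.isIdempotentElem_toSubmodule _).le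

end ExteriorPower

/-- `b` is the pairing `⋀ᵐM × ⋀ⁿM → R` given by the wedge product measured in units of `vol`,
i.e. `x ∧ y = b(x,y) • vol`. Only `k = m + n` is of interest; the degree `k` is kept separate so
that `vol : ⋀[R]^4 M` can be used with `m = n = 2`. -/
def IsWedgePairing {R M : Type*} [CommRing R] [AddCommGroup M] [Module R M] {m n k : ℕ}
    (vol : ⋀[R]^k M) (b : ⋀[R]^m M →ₗ[R] ⋀[R]^n M →ₗ[R] R) : Prop :=
  ∀ (x : ⋀[R]^m M) (y : ⋀[R]^n M), (x : ExteriorAlgebra R M) * (y : ExteriorAlgebra R M) =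
    b x y • (vol : ExteriorAlgebra R M)

namespace IsWedgePairing

variable {R M I : Type*} [CommRing R] [AddCommGroup M] [Module R M] [LinearOrder I] {m n k : ℕ}

lemma apply_eq_of_mul_eq {vol : ⋀[R]^k M} {b : ⋀[R]^m M →ₗ[R] ⋀[R]^n M →ₗ[R] R}
    (hb : IsWedgePairing vol b) (hvol : Function.Injective fun c : R => c • vol)
    {x : ⋀[R]^m M} {y : ⋀[R]^n M} {c : R}
    (h : (x : ExteriorAlgebra R M) * (y : ExteriorAlgebra R M) =
      c • (vol : ExteriorAlgebra R M)) : b x y = c :=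
  hvol (Subtype.ext ((hb x y).symm.trans h))

lemma apply_comm_of_even {vol : ⋀[R]^k M} {b : ⋀[R]^n M →ₗ[R] ⋀[R]^n M →ₗ[R] R}
    (hb : IsWedgePairing vol b) (hvol : Function.Injective fun c : R => c • vol) (hn : Even n)
    (x y : ⋀[R]^n M) : b x y = b y x := by
  refine hb.apply_eq_of_mul_eq hvol ?_
  rw [← hb y x]
  exact (Subalgebra.mem_center_iff (R := R)).1 (exteriorPower_le_center_of_even hn y.2) x

lemma apply_basis_eq_zero_of_not_disjoint {vol : ⋀[R]^k M}
    {b : ⋀[R]^m M →ₗ[R] ⋀[R]^n M →ₗ[R] R} (hb : IsWedgePairing vol b)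
    (hvol : Function.Injective fun c : R => c • vol) (e : Basis I R M)
    {s : Set.powersetCard I m} {t : Set.powersetCard I n} (hst : ¬Disjoint s.val t.val) :
    b (e.exteriorPower m s) (e.exteriorPower n t) = 0 := by
  refine hb.apply_eq_of_mul_eq hvol ?_
  rw [zero_smul, exteriorPower.basis_apply, exteriorPower.basis_apply]
  exact ExteriorAlgebra.ιMulti_family_mul_of_not_disjoint R e s t hst

lemma isUnit_apply_basis_of_disjoint [Fintype I] {vol : ⋀[R]^(m + n) M}
    {b : ⋀[R]^m M →ₗ[R] ⋀[R]^n M →ₗ[R] R} (hb : IsWedgePairing vol b)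
    (hvol : Function.Injective fun c : R => c • vol) (e : Basis I R M)
    (hI : Fintype.card I = m + n) {s : Set.powersetCard I m} {t : Set.powersetCard I n}
    (hst : Disjoint s.val t.val) : IsUnit (b (e.exteriorPower m s) (e.exteriorPower n t)) := by
  set β := b (e.exteriorPower m s) (e.exteriorPower n t)
  let top := e.exteriorPower (m + n) (Set.powersetCard.disjUnion hst)
  let δ := (Set.powersetCard.permOfDisjoint hst).sign
  have hβ : β • vol = δ • top := by
    apply Subtype.ext
    simp only [top, exteriorPower.basis_apply]
    refine (hb _ _).symm.trans ?_
    rw [exteriorPower.basis_apply, exteriorPower.basis_apply]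
    exact ExteriorAlgebra.ιMulti_family_mul_of_disjoint R e s t hst
  obtain ⟨c, hc⟩ : ∃ c : R, c • top = vol := Submodule.mem_span_singleton.1 <|
    span_exteriorPower_basis_singleton_eq_top e hI _ ▸ Submodule.mem_top
  refine IsUnit.of_mul_eq_one_right (δ • c) (hvol ?_)
  calc (δ • c * β) • vol = δ • c • β • vol := by rw [mul_smul, smul_assoc]
    _ = vol := by rw [hβ, smul_comm c δ, smul_smul, Int.units_mul_self, one_smul, hc]
    _ = (1 : R) • vol := (one_smul R vol).symm

end IsWedgePairing

lemma hasGramMatrix_hyperbolic_of_isotropic_basis {M : Type*} [AddCommGroup M]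
    {b : M →ₗ[ℤ] M →ₗ[ℤ] ℤ} {T : Submodule ℤ M} (v : Basis (Fin 2) ℤ T)
    (h₀ : b (v 0) (v 0) = 0) (h₁ : b (v 1) (v 1) = 0) (h_unit : IsUnit (b (v 0) (v 1)))
    (h_symm : b (v 1) (v 0) = b (v 0) (v 1)) : HasGramMatrix b T !![0, 1; 1, 0] := by
  obtain ⟨δ, hδ⟩ := h_unit
  refine ⟨v.unitsSMul ![1, δ], fun i j => ?_⟩
  fin_cases i <;> fin_cases j <;>
    simp [Basis.unitsSMul_apply, Units.smul_def, h₀, h₁, h_symm, ← hδ]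

theorem hasGramMatrix_hyperbolic_of_diagonal {M : Type*} [AddCommGroup M] {e : Basis (Fin 4) ℤ M}
    {f : M →ₗ[ℤ] M} (hf : ∀ i, f (e i) = (![1, 1, -1, -1] : Fin 4 → ℤ) i • e i) {vol : ⋀[ℤ]^4 M}
    (hvol : Submodule.span ℤ {vol} = ⊤) {b : ⋀[ℤ]^2 M →ₗ[ℤ] ⋀[ℤ]^2 M →ₗ[ℤ] ℤ}
    (hb : IsWedgePairing vol b) :
    HasGramMatrix b (LinearMap.ker (extPowMap 2 f - LinearMap.id)) !![0, 1; 1, 0] := by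
  have : Module.Free ℤ M := .of_basis e
  have : Module.Finite ℤ M := .of_basis e
  have hrank : finrank ℤ (⋀[ℤ]^4 M) = 1 := by
    rw [exteriorPower.finrank_eq, finrank_eq_card_basis e, Fintype.card_fin, Nat.choose_self]
  have hinj := smul_left_injective_of_span_singleton_eq_top hrank hvol
  let S : Fin 2 → Set.powersetCard (Fin 4) 2 := ![⟨{0, 1}, rfl⟩, ⟨{2, 3}, rfl⟩]
  have hS : ∀ s : Set.powersetCard (Fin 4) 2,
      ∏ i ∈ (s : Finset (Fin 4)), (![1, 1, -1, -1] : Fin 4 → ℤ) i = 1 ↔ s ∈ Set.range S := by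
    have hprod : ∀ t : Finset (Fin 4), t.card = 2 →
        (∏ i ∈ t, (![1, 1, -1, -1] : Fin 4 → ℤ) i = 1 ↔ {0, 1} = t ∨ {2, 3} = t) := by decide
    intro s
    rw [hprod s s.2, Set.mem_range, Fin.exists_fin_two, Subtype.ext_iff, Subtype.ext_iff]
    rfl
  obtain ⟨v, hv⟩ := exists_basis_ker_sub_id_of_diagonal (f := S) (by decide)
    (extPowMap_basis_of_diagonal hf) hS
  refine hasGramMatrix_hyperbolic_of_isotropic_basis v ?_ ?_ ?_ ?_
  · rw [hv]
    exact hb.apply_basis_eq_zero_of_not_disjoint hinj e (by decide)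
  · rw [hv]
    exact hb.apply_basis_eq_zero_of_not_disjoint hinj e (by decide)
  · rw [hv, hv]
    exact hb.isUnit_apply_basis_of_disjoint hinj e rfl (by decide)
  · exact hb.apply_comm_of_even hinj even_two _ _

/-- The product of two submodules, as an external product of modules, is linearly equivalent to
the submodule `p.prod q`; this transports product bases to `Λ₁ × Λ₂`. -/
def submoduleProdEquiv {R M N : Type*} [Semiring R] [AddCommMonoid M] [Module R M]
    [AddCommMonoid N] [Module R N] (p : Submodule R M) (q : Submodule R N) :
    (p × q) ≃ₗ[R] p.prod q where
  toFun x := ⟨(x.1, x.2), x.1.2, x.2.2⟩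
  invFun x := (⟨x.1.1, x.2.1⟩, ⟨x.1.2, x.2.2⟩)
  map_add' _ _ := rfl
  map_smul' _ _ := rfl
  left_inv _ := rfl
  right_inv _ := rfl

/-- The involution `(z, w) ↦ (z, -w)` of `M × N`, which for `M = N = ℂ` is the automorphism `σ`. -/
def negSnd (R M N : Type*) [Ring R] [AddCommGroup M] [Module R M] [AddCommGroup N] [Module R N] :
    (M × N) ≃ₗ[R] (M × N) :=
  (LinearEquiv.refl R M).prodCongr (LinearEquiv.neg R)

lemma det_negSnd (R M N : Type*) [CommRing R] [AddCommGroup M] [Module R M] [Module.Free R M]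
    [Module.Finite R M] [AddCommGroup N] [Module R N] [Module.Free R N] [Module.Finite R N] :
    LinearMap.det (negSnd R M N : (M × N) →ₗ[R] (M × N)) = (-1) ^ finrank R N := by
  have h : (negSnd R M N : (M × N) →ₗ[R] (M × N)) =
      LinearMap.prodMap LinearMap.id ((-1 : R) • LinearMap.id) :=
    LinearMap.ext fun x => Prod.ext rfl (neg_one_smul R x.2).symm
  rw [h, LinearMap.det_prodMap, LinearMap.det_smul, LinearMap.det_id, LinearMap.det_id, one_mul,
    mul_one]

lemma orderOf_negSnd (R M N : Type*) [Ring R] [AddCommGroup M] [Module R M] [AddCommGroup N]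
    [Module R N] [Nontrivial N] [IsAddTorsionFree N] : orderOf (negSnd R M N) = 2 := by
  obtain ⟨y, hy⟩ := exists_ne (0 : N)
  refine orderOf_eq_prime (LinearEquiv.ext fun x => Prod.ext rfl (neg_neg x.2)) fun h => hy ?_
  have h_neg : -y = y := congrArg Prod.snd (LinearEquiv.congr_fun h (0, y))
  exact self_eq_neg.1 h_neg.symm

lemma preservesLattice_negSnd (Λ₁ Λ₂ : Submodule ℤ ℂ) :
    PreservesLattice (negSnd ℂ ℂ ℂ) (Λ₁.prod Λ₂) := by
  have hmem {x : ℂ × ℂ} (hx : x ∈ Λ₁.prod Λ₂) : negSnd ℂ ℂ ℂ x ∈ Λ₁.prod Λ₂ :=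
    ⟨hx.1, Λ₂.neg_mem hx.2⟩
  apply le_antisymm
  · rintro _ ⟨x, hx, rfl⟩
    exact hmem hx
  · exact fun x hx => ⟨negSnd ℂ ℂ ℂ x, hmem hx, Prod.ext rfl (neg_neg x.2)⟩

lemma exists_basis_latRestrict_negSnd_diagonal {Λ₁ Λ₂ : Submodule ℤ ℂ}
    (b₁ : Basis (Fin 2) ℤ Λ₁) (b₂ : Basis (Fin 2) ℤ Λ₂)
    (h : PreservesLattice (negSnd ℂ ℂ ℂ) (Λ₁.prod Λ₂)) :
    ∃ e : Basis (Fin 4) ℤ (Λ₁.prod Λ₂), ∀ i,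
      latRestrict (negSnd ℂ ℂ ℂ) _ h (e i) = (![1, 1, -1, -1] : Fin 4 → ℤ) i • e i := by
  have hsign : ∀ j : Fin 2 ⊕ Fin 2, (![1, 1, -1, -1] : Fin 4 → ℤ) (finSumFinEquiv j) =
      Sum.elim (fun _ => 1) (fun _ => -1) j := by decide
  refine ⟨((b₁.prod b₂).map (submoduleProdEquiv Λ₁ Λ₂)).reindex finSumFinEquiv, fun i => ?_⟩
  apply Subtype.ext
  change negSnd ℂ ℂ ℂ _ = _
  obtain ⟨i, rfl⟩ := (finSumFinEquiv (m := 2) (n := 2)).surjective i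
  rw [Basis.reindex_apply, Equiv.symm_apply_apply, hsign]
  rcases i with i | i <;> simp [submoduleProdEquiv, negSnd]

theorem stmt_14_general {Λ₁ Λ₂ : Submodule ℤ ℂ} (b₁ : Basis (Fin 2) ℤ Λ₁)
    (b₂ : Basis (Fin 2) ℤ Λ₂) (Λ : Submodule ℤ (ℂ × ℂ)) (hΛ : Λ = Λ₁.prod Λ₂)
    (σ : (ℂ × ℂ) ≃ₗ[ℂ] (ℂ × ℂ)) (hσ : ∀ z w : ℂ, σ (z, w) = (z, -w)) :
    PreservesLattice σ Λ ∧
    LinearMap.det (σ : (ℂ × ℂ) →ₗ[ℂ] (ℂ × ℂ)) ≠ 1 ∧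
    orderOf σ = 2 ∧
    ∀ (h : PreservesLattice σ Λ) (vol : ⋀[ℤ]^4 ↥Λ), Submodule.span ℤ {vol} = ⊤ →
      ∀ b : ⋀[ℤ]^2 ↥Λ →ₗ[ℤ] ⋀[ℤ]^2 ↥Λ →ₗ[ℤ] ℤ, IsWedgeForm Λ vol b →
        HasGramMatrix b (invLat σ Λ h) !![0, 1; 1, 0] := by
  obtain rfl : σ = negSnd ℂ ℂ ℂ := LinearEquiv.ext fun x => hσ x.1 x.2
  subst hΛ
  refine ⟨preservesLattice_negSnd Λ₁ Λ₂, ?_, orderOf_negSnd ℂ ℂ ℂ, fun h vol hvol b hb => ?_⟩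
  · rw [det_negSnd, finrank_self, pow_one]
    norm_num
  · obtain ⟨e, he⟩ := exists_basis_latRestrict_negSnd_diagonal b₁ b₂ h
    exact hasGramMatrix_hyperbolic_of_diagonal he hvol hb

/-- For the product `Λ = Λ₁ × Λ₂` of two lattices in `ℂ` and the automorphism
`σ(z,w) = (z,-w)` of `ℂ²`: `σ` preserves `Λ`, is non-symplectic of order 2, and for any
generator `vol` of `⋀⁴Λ` the invariant lattice, with the wedge form determined by `vol`,
is isometric to the hyperbolic plane `U`. -/
theorem stmt_14 (Λ₁ Λ₂ : Submodule ℤ ℂ)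
    (h₁ : ∃ b : Basis (Fin 2) ℝ ℂ, Λ₁ = Submodule.span ℤ (Set.range b))
    (h₂ : ∃ b : Basis (Fin 2) ℝ ℂ, Λ₂ = Submodule.span ℤ (Set.range b))
    (Λ : Submodule ℤ (ℂ × ℂ)) (hΛ : Λ = Λ₁.prod Λ₂)
    (σ : (ℂ × ℂ) ≃ₗ[ℂ] (ℂ × ℂ)) (hσ : ∀ z w : ℂ, σ (z, w) = (z, -w)) :
    PreservesLattice σ Λ ∧
    LinearMap.det (σ : (ℂ × ℂ) →ₗ[ℂ] (ℂ × ℂ)) ≠ 1 ∧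
    orderOf σ = 2 ∧
    ∀ (h : PreservesLattice σ Λ) (vol : ⋀[ℤ]^4 ↥Λ), Submodule.span ℤ {vol} = ⊤ →
      ∀ b : ⋀[ℤ]^2 ↥Λ →ₗ[ℤ] ⋀[ℤ]^2 ↥Λ →ₗ[ℤ] ℤ, IsWedgeForm Λ vol b →
        HasGramMatrix b (invLat σ Λ h) !![0, 1; 1, 0] := by
  rcases h₁, h₂ with ⟨⟨b₁, rfl⟩, b₂, rfl⟩
  exact stmt_14_general (b₁.restrictScalars ℤ) (b₂.restrictScalars ℤ) Λ hΛ σ hσ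
end
end

section
/- Let Λ = ℤ[i] × ℤ[i] ⊆ ℂ² (Gaussian integers in each coordinate) and let σ be the ℂ-linear automorphism of ℂ² given by multiplication by i in both coordinates. Then σ(Λ) = Λ, σ has order 4, the induced map ⋀²(σ|_Λ) has order 2, and there exists a generator vol of ⋀⁴Λ such that the fixed submodule {x ∈ ⋀²Λ : ⋀²(σ|_Λ)(x) = x}, with the restriction of the wedge form determined by vol, is isometric to U⊕⟨−2⟩⊕⟨−2⟩. -/
set_option synthInstance.maxHeartbeats 1000000
set_option maxHeartbeats 1000000

open ExteriorAlgebra Module Matrix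

noncomputable section

/-!
Multiplication by `i` sends the basis `1, i` of `ℤ[i]` to `i, -1`. In a suitable basis of wedge
products, `⋀²Λ` is `U ⊕ (-U) ⊕ (-U)`, and `⋀²σ` permutes this basis without signs: it fixes the two
generators of `U` and interchanges the two isotropic generators of each `-U`. So `⋀²σ` has the order
of that permutation, and the sums over its cycles form a basis of the fixed lattice: the generators
of `U` and one vector of norm `-2` in each `-U`.
-/

section PermutedBasis

variable {ι κ R L : Type*} [Ring R] [AddCommGroup L] [Module R L]
  {e : Basis ι R L} {T : Module.End R L} {π : Equiv.Perm ι}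

lemma repr_perm_apply (hT : ∀ i, T (e i) = e (π i)) (x : L) (i : ι) :
    e.repr (T x) (π i) = e.repr x i := by
  have h : e.coord (π i) ∘ₗ T = e.coord i := e.ext fun j => by
    simp [hT, Finsupp.single_apply_left π.injective]
  exact LinearMap.congr_fun h x

lemma apply_eq_self_iff_repr_perm (hT : ∀ i, T (e i) = e (π i)) {x : L} :
    T x = x ↔ ∀ i, e.repr x (π i) = e.repr x i := by
  refine ⟨fun hx i => ?_, fun hx => e.repr.injective (Finsupp.ext fun i => ?_)⟩
  · simpa only [hx] using repr_perm_apply hT x i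
  · obtain ⟨j, rfl⟩ := π.surjective i
    rw [repr_perm_apply hT, hx]

lemma pow_apply_basis (hT : ∀ i, T (e i) = e (π i)) (n : ℕ) (i : ι) :
    (T ^ n) (e i) = e ((π ^ n) i) := by
  induction n with
  | zero => rfl
  | succ n ih => rw [pow_succ', Module.End.mul_apply, ih, hT, pow_succ', Equiv.Perm.mul_apply]

lemma orderOf_eq_orderOf_perm [Nontrivial R] (hT : ∀ i, T (e i) = e (π i)) :
    orderOf T = orderOf π := by
  refine orderOf_eq_orderOf_iff.2 fun n => ⟨fun h => Equiv.ext fun i => e.injective ?_,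
    fun h => e.ext fun i => ?_⟩
  · rw [← pow_apply_basis hT, h]; rfl
  · rw [pow_apply_basis hT, h]; rfl

lemma apply_eq_of_sameCycle {α : Type*} {c : ι → α} (hc : ∀ i, c (π i) = c i) {i j : ι}
    (h : π.SameCycle i j) : c i = c j := by
  obtain ⟨n, rfl⟩ := h
  induction n with
  | zero => rfl
  | succ n ih => rw [ih, add_comm, _root_.zpow_one_add, Equiv.Perm.mul_apply, hc]
  | pred n ih =>
    rw [ih, ← hc ((π ^ (-(n : ℤ) - 1)) i), ← Equiv.Perm.mul_apply, ← _root_.zpow_one_add,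
      add_sub_cancel]

variable [Fintype ι] {q : ι → κ}

/-- The basis of the fixed submodule of an operator `T` permuting the basis `e` by `π`, consisting
of the sums of `e` over the cycles of `π`. The cycles are given as the fibres of a surjection `q`,
so that they can be numbered as the application requires. -/
def fixedBasis [Finite κ] (hT : ∀ i, T (e i) = e (π i)) (hq : Function.Surjective q)
    (hqπ : ∀ i j, q i = q j ↔ π.SameCycle i j) : Basis κ R (LinearMap.ker (T - LinearMap.id)) :=
  .ofEquivFun
    { toFun := fun x k => e.equivFun x (Function.surjInv hq k)
      map_add' := fun x y => by ext; simp
      map_smul' := fun r x => by ext; simp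
      invFun := fun c => ⟨e.equivFun.symm (c ∘ q), by
        rw [LinearMap.mem_ker, LinearMap.sub_apply, sub_eq_zero, LinearMap.id_apply,
          apply_eq_self_iff_repr_perm hT]
        intro i
        change e.equivFun _ (π i) = e.equivFun _ i
        simp only [LinearEquiv.apply_symm_apply, Function.comp_apply]
        rw [(hqπ (π i) i).2 (Equiv.Perm.sameCycle_apply_left.2 .rfl)]⟩
      left_inv := fun x => by
        have hx := (apply_eq_self_iff_repr_perm hT).1 (sub_eq_zero.1 (LinearMap.mem_ker.1 x.2))
        refine Subtype.ext (e.equivFun.symm_apply_eq.2 (funext fun i => ?_))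
        exact apply_eq_of_sameCycle hx ((hqπ _ _).1 (Function.surjInv_eq hq (q i)))
      right_inv := fun c => by
        ext k
        change e.equivFun (e.equivFun.symm (c ∘ q)) (Function.surjInv hq k) = c k
        rw [LinearEquiv.apply_symm_apply, Function.comp_apply, Function.surjInv_eq hq] }

lemma coe_fixedBasis [Finite κ] [DecidableEq κ] (hT : ∀ i, T (e i) = e (π i))
    (hq : Function.Surjective q) (hqπ : ∀ i j, q i = q j ↔ π.SameCycle i j) (k : κ) :
    (fixedBasis hT hq hqπ k : L) = ∑ i with q i = k, e i := by
  simp [fixedBasis, Basis.equivFun_symm_apply, Pi.single_apply, Finset.sum_filter]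

end PermutedBasis

/-- The Gram matrix of the sums over the fibres of `q` of vectors with Gram matrix `G`. -/
def orbitGram {ι κ α : Type*} [Fintype ι] [DecidableEq κ] [AddCommMonoid α] (q : ι → κ)
    (G : Matrix ι ι α) : Matrix κ κ α :=
  .of fun k l => ∑ i with q i = k, ∑ j with q j = l, G i j

lemma hasGramMatrix_ker_sub_id {L : Type*} [AddCommGroup L] {m n : ℕ} {e : Basis (Fin m) ℤ L}
    {T : Module.End ℤ L} {π : Equiv.Perm (Fin m)} (hT : ∀ i, T (e i) = e (π i))
    {q : Fin m → Fin n} (hq : Function.Surjective q) (hqπ : ∀ i j, q i = q j ↔ π.SameCycle i j)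
    {B : L →ₗ[ℤ] L →ₗ[ℤ] ℤ} {G : Matrix (Fin m) (Fin m) ℤ} (hB : ∀ i j, B (e i) (e j) = G i j) :
    HasGramMatrix B (LinearMap.ker (T - LinearMap.id)) (orbitGram q G) :=
  ⟨fixedBasis hT hq hqπ, fun k l => by
    simp only [coe_fixedBasis, map_sum, LinearMap.sum_apply, hB, orbitGram, Matrix.of_apply]
    rw [Finset.sum_comm]⟩

section TopPower

variable {R M : Type*} [CommRing R] [AddCommGroup M] [Module R M] {n : ℕ} (b : Basis (Fin n) R M)

lemma ιMulti_eq_det_smul (v : Fin n → M) :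
    exteriorPower.ιMulti R n v = b.det v • exteriorPower.ιMulti R n b := by
  have h : exteriorPower.ιMulti R n
      = (LinearMap.toSpanSingleton R _ (exteriorPower.ιMulti R n b)).compAlternatingMap b.det := by
    refine Basis.ext_alternating b fun w hw => ?_
    obtain ⟨τ, rfl⟩ : ∃ τ : Equiv.Perm (Fin n), τ = w :=
      ⟨.ofBijective w (Finite.injective_iff_bijective.1 hw), rfl⟩
    have hω := (exteriorPower.ιMulti R n).map_perm b τ
    have hdet := b.det.map_perm b τ
    rw [Function.comp_def] at hω hdet
    rw [hω, LinearMap.compAlternatingMap_apply, hdet, b.det_self, LinearMap.toSpanSingleton_apply]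
    simp [Units.smul_def, Int.cast_smul_eq_zsmul]
  exact DFunLike.congr_fun h v

lemma span_ιMulti_eq_top : Submodule.span R {exteriorPower.ιMulti R n b} = ⊤ := by
  rw [eq_top_iff, ← exteriorPower.ιMulti_span, Submodule.span_le]
  rintro _ ⟨v, rfl⟩
  exact Submodule.mem_span_singleton.2 ⟨_, (ιMulti_eq_det_smul b v).symm⟩

lemma smul_ιMulti_injective :
    Function.Injective fun r : R => r • exteriorPower.ιMulti R n b := fun r s h => by
  simpa [Basis.det_self] using congrArg (exteriorPower.alternatingMapLinearEquiv b.det) h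

lemma det_comp_basis {ι : Type*} [Fintype ι] [DecidableEq ι] (b : Basis ι R M) (f : ι → ι) :
    b.det (b ∘ f) = (((1 : Matrix ι ι ℤ).submatrix id f).det : R) := by
  rw [Basis.det_apply, Int.cast_det]
  congr 1
  ext i j
  simp [Basis.toMatrix_apply, Matrix.one_apply, Finsupp.single_apply, eq_comm]

end TopPower

section RankFour

variable {R M : Type*} [CommRing R] [AddCommGroup M] [Module R M]

lemma extPowMap_ιMulti {N : Type*} [AddCommGroup N] [Module R N] {n : ℕ} (f : M →ₗ[R] N)
    (v : Fin n → M) :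
    extPowMap n f (exteriorPower.ιMulti R n v) = exteriorPower.ιMulti R n (f ∘ v) :=
  Subtype.ext (ExteriorAlgebra.map_apply_ιMulti f v)

lemma comp_pair {α β : Type*} (f : α → β) (x y : α) : f ∘ ![x, y] = ![f x, f y] :=
  (FinVec.map_eq f _).symm

lemma map_pair_swap {N : Type*} [AddCommGroup N] [Module R N] (f : M [⋀^Fin 2]→ₗ[R] N)
    (x y : M) : f ![y, x] = -f ![x, y] := by
  have hswap : ![x, y] ∘ Equiv.swap 0 1 = ![y, x] := List.ofFn_inj.1 rfl
  rw [← hswap, f.map_swap _ Fin.zero_ne_one]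

lemma map_pair_neg_right {N : Type*} [AddCommGroup N] [Module R N] (f : M [⋀^Fin 2]→ₗ[R] N)
    (x y : M) : f ![x, -y] = f ![y, x] := by
  have hneg : f ![x, -y] = -f ![x, y] := by
    have update_one (z : M) : Function.update ![x, y] 1 z = ![x, z] := List.ofFn_inj.1 rfl
    simpa only [update_one] using f.map_update_neg ![x, y] 1 y
  rw [hneg, map_pair_swap f x y]

/-- The index pairs `(i, j)` for which the wedge products `bᵢ ∧ bⱼ` form three hyperbolic pairs
of `⋀²M`. The last pair is not increasing: with `b₂ ∧ b₁` instead of `b₁ ∧ b₂`, a complex structure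
`J` on `M` with `J b₀ = b₁` and `J b₂ = b₃` permutes these products without signs. -/
def wedgePairs : Fin 6 → Fin 2 → Fin 4 :=
  ![![0, 1], ![2, 3], ![0, 2], ![1, 3], ![0, 3], ![2, 1]]

/-- The Gram matrix of `U ⊕ (-U) ⊕ (-U)`. -/
def hyperbolicGram : Matrix (Fin 6) (Fin 6) ℤ :=
  !![0, 1, 0, 0, 0, 0;
     1, 0, 0, 0, 0, 0;
     0, 0, 0, -1, 0, 0;
     0, 0, -1, 0, 0, 0;
     0, 0, 0, 0, 0, -1;
     0, 0, 0, 0, -1, 0]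

/-- The permutation of `wedgePairs` induced by a complex structure `J` on `M` with `J b₀ = b₁` and
`J b₂ = b₃`. -/
def wedgePerm : Equiv.Perm (Fin 6) := Equiv.swap 2 3 * Equiv.swap 4 5

/-- A numbering of the cycles of `wedgePerm`: the cycle of `k` has number `wedgeCycle k`. -/
def wedgeCycle : Fin 6 → Fin 4 := ![0, 1, 2, 2, 3, 3]

lemma orderOf_wedgePerm : orderOf wedgePerm = 2 :=
  orderOf_eq_prime (by decide) (by decide)

lemma wedgeCycle_surjective : Function.Surjective wedgeCycle := by
  decide

lemma wedgeCycle_eq_iff_sameCycle (k l : Fin 6) :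
    wedgeCycle k = wedgeCycle l ↔ wedgePerm.SameCycle k l := by
  decide +revert

lemma orbitGram_wedgeCycle_hyperbolicGram : orbitGram wedgeCycle hyperbolicGram
    = !![0, 1, 0, 0; 1, 0, 0, 0; 0, 0, -2, 0; 0, 0, 0, -2] := by
  decide

lemma det_append_wedgePairs (k l : Fin 6) :
    ((1 : Matrix (Fin 4) (Fin 4) ℤ).submatrix id
      (Fin.append (m := 2) (n := 2) (wedgePairs k) (wedgePairs l))).det = hyperbolicGram k l := by
  revert l
  fin_cases k <;> decide +kernel

lemma exists_wedgePairs_eq {i j : Fin 4} (h : i ≠ j) :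
    ∃ k, wedgePairs k = ![i, j] ∨ wedgePairs k = ![j, i] := by
  decide +revert

variable (b : Basis (Fin 4) R M)

lemma span_range_ιMulti_comp_wedgePairs :
    ⊤ ≤ Submodule.span R (Set.range fun k => exteriorPower.ιMulti R 2 (b ∘ wedgePairs k)) := by
  rw [← exteriorPower.ιMulti_family_span_of_span R b.span_eq, Submodule.span_le]
  rintro _ ⟨s, rfl⟩
  obtain ⟨i, j, hij, hs⟩ : ∃ i j, i ≠ j ∧ ⇑(Set.powersetCard.ofFinEmbEquiv.symm s) = ![i, j] :=
    ⟨_, _, (EmbeddingLike.injective _).ne Fin.zero_ne_one, (FinVec.etaExpand_eq _).symm⟩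
  rw [exteriorPower.ιMulti_family, hs]
  obtain ⟨k, hk | hk⟩ := exists_wedgePairs_eq hij
  · exact Submodule.subset_span ⟨k, by simp only [hk]⟩
  · rw [comp_pair, map_pair_swap, ← comp_pair b, ← hk]
    exact neg_mem (Submodule.subset_span ⟨k, rfl⟩)

variable [Nontrivial R]

/-- The basis of `⋀²M` consisting of the wedge products indexed by `wedgePairs`. -/
def wedgeBasis : Basis (Fin 6) R (⋀[R]^2 M) :=
  basisOfTopLeSpanOfCardEqFinrank _ (span_range_ιMulti_comp_wedgePairs b) <| by
    have := Module.Free.of_basis b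
    have := Module.Finite.of_basis b
    rw [exteriorPower.finrank_eq, finrank_eq_card_basis b]
    rfl

lemma wedgeBasis_apply (k : Fin 6) :
    wedgeBasis b k = exteriorPower.ιMulti R 2 (b ∘ wedgePairs k) :=
  congrFun (coe_basisOfTopLeSpanOfCardEqFinrank _ _ _) k

lemma coe_wedgeBasis_mul (k l : Fin 6) :
    (wedgeBasis b k * wedgeBasis b l : ExteriorAlgebra R M)
      = (hyperbolicGram k l : R) • (exteriorPower.ιMulti R 4 b : ExteriorAlgebra R M) := by
  rw [wedgeBasis_apply, wedgeBasis_apply, ← det_append_wedgePairs, ← det_comp_basis b,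
    ← Submodule.coe_smul, ← ιMulti_eq_det_smul]
  simp only [exteriorPower.ιMulti_apply_coe, ExteriorAlgebra.ιMulti_mul_ιMulti]
  rfl

lemma extPowMap_wedgeBasis {b : Basis (Fin 4) R M} {J : M →ₗ[R] M} (h0 : J (b 0) = b 1)
    (h2 : J (b 2) = b 3) (hJ : ∀ x, J (J x) = -x) (k : Fin 6) :
    extPowMap 2 J (wedgeBasis b k) = wedgeBasis b (wedgePerm k) := by
  have h1 : J (b 1) = -b 0 := by rw [← h0, hJ]
  have h3 : J (b 3) = -b 2 := by rw [← h2, hJ]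
  simp only [wedgeBasis_apply, extPowMap_ιMulti]
  fin_cases k <;>
    simp [wedgePairs, wedgePerm, Equiv.swap_apply_def, comp_pair, h0, h1, h2, h3,
      map_pair_neg_right]

lemma orderOf_extPowMap_two {b : Basis (Fin 4) R M} {J : M →ₗ[R] M} (h0 : J (b 0) = b 1)
    (h2 : J (b 2) = b 3) (hJ : ∀ x, J (J x) = -x) : orderOf (extPowMap 2 J) = 2 :=
  (orderOf_eq_orderOf_perm (extPowMap_wedgeBasis h0 h2 hJ)).trans orderOf_wedgePerm

lemma hasGramMatrix_ker_extPowMap_two_sub_id {L : Type*} [AddCommGroup L] {b : Basis (Fin 4) ℤ L}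
    {J : L →ₗ[ℤ] L} (h0 : J (b 0) = b 1) (h2 : J (b 2) = b 3) (hJ : ∀ x, J (J x) = -x)
    {B : ⋀[ℤ]^2 L →ₗ[ℤ] ⋀[ℤ]^2 L →ₗ[ℤ] ℤ}
    (hB : ∀ x y : ⋀[ℤ]^2 L, (x : ExteriorAlgebra ℤ L) * (y : ExteriorAlgebra ℤ L)
      = B x y • (exteriorPower.ιMulti ℤ 4 b : ExteriorAlgebra ℤ L)) :
    HasGramMatrix B (LinearMap.ker (extPowMap 2 J - LinearMap.id))
      !![0, 1, 0, 0; 1, 0, 0, 0; 0, 0, -2, 0; 0, 0, 0, -2] := by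
  have hG (k l) : B (wedgeBasis b k) (wedgeBasis b l) = hyperbolicGram k l :=
    smul_ιMulti_injective b <| Subtype.ext <| (hB _ _).symm.trans (coe_wedgeBasis_mul b k l)
  rw [← orbitGram_wedgeCycle_hyperbolicGram]
  exact hasGramMatrix_ker_sub_id (extPowMap_wedgeBasis h0 h2 hJ) wedgeCycle_surjective
    wedgeCycle_eq_iff_sameCycle hG

end RankFour

section Gaussian

lemma preservesLattice_of_apply_apply_eq_neg {Λ : Submodule ℤ (ℂ × ℂ)}
    {σ : (ℂ × ℂ) ≃ₗ[ℂ] (ℂ × ℂ)} (hσ : ∀ x, σ (σ x) = -x) (hΛ : ∀ x ∈ Λ, σ x ∈ Λ) :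
    PreservesLattice σ Λ := by
  refine le_antisymm (Submodule.map_le_iff_le_comap.2 hΛ) fun x hx => ?_
  exact ⟨-σ x, Λ.neg_mem (hΛ x hx), by simp [hσ]⟩

lemma orderOf_eq_four_of_apply_apply_eq_neg {R M : Type*} [Semiring R] [AddCommGroup M]
    [Module R M] {σ : M ≃ₗ[R] M} (hσ : ∀ x, σ (σ x) = -x) {x : M} (hx : -x ≠ x) :
    orderOf σ = 4 := by
  refine orderOf_eq_prime_pow (p := 2) (n := 1) (fun h => hx ?_) ?_
  · rw [← hσ]; exact LinearEquiv.congr_fun h x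
  · ext y
    simp [pow_succ, hσ]

lemma I_mul_mem_span_one_I {z : ℂ} (hz : z ∈ Submodule.span ℤ ({1, Complex.I} : Set ℂ)) :
    Complex.I * z ∈ Submodule.span ℤ ({1, Complex.I} : Set ℂ) := by
  obtain ⟨m, n, rfl⟩ := Submodule.mem_span_pair.1 hz
  exact Submodule.mem_span_pair.2 ⟨-n, m, Complex.ext (by simp) (by simp)⟩

lemma span_range_basis_prod {R S M N ι κ : Type*} [Semiring R] [Semiring S] [AddCommMonoid M]
    [Module S M] [Module R M] [AddCommMonoid N] [Module S N] [Module R N]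
    (b : Basis ι S M) (c : Basis κ S N) :
    Submodule.span R (Set.range (b.prod c))
      = (Submodule.span R (Set.range b)).prod (Submodule.span R (Set.range c)) := by
  rw [← LinearMap.span_inl_union_inr, ← Set.range_comp, ← Set.range_comp, ← Set.Sum.elim_range]
  congr 2
  ext i : 1
  rcases i with i | i <;> ext <;> simp

/-- The basis `(1, 0), (i, 0), (0, 1), (0, i)` of the lattice `ℤ[i] × ℤ[i]`. -/
def gaussianProdBasis : Basis (Fin 4) ℤ
    ((Submodule.span ℤ ({1, Complex.I} : Set ℂ)).prod
      (Submodule.span ℤ ({1, Complex.I} : Set ℂ))) :=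
  (((Complex.basisOneI.prod Complex.basisOneI).restrictScalars ℤ).reindex finSumFinEquiv).map <|
    LinearEquiv.ofEq _ _ <| by
      rw [span_range_basis_prod, Complex.coe_basisOneI, Matrix.range_cons_cons_empty]

lemma coe_gaussianProdBasis (k : Fin 4) : (gaussianProdBasis k : ℂ × ℂ)
    = ![(1, 0), (Complex.I, 0), (0, 1), (0, Complex.I)] k := by
  fin_cases k <;> simp [gaussianProdBasis, finSumFinEquiv, Fin.addCases]

end Gaussian

/-- For `Λ = ℤ[i] × ℤ[i]` and `σ` the multiplication by `i` in both coordinates: `σ`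
preserves `Λ`, has order 4, the induced map `⋀²(σ|_Λ)` has order 2, and for a suitable
generator `vol` of `⋀⁴Λ` the invariant lattice, with the wedge form determined by `vol`,
is isometric to `U ⊕ ⟨-2⟩ ⊕ ⟨-2⟩`. -/
theorem stmt_15 (Λ : Submodule ℤ (ℂ × ℂ))
    (hΛ : Λ = (Submodule.span ℤ ({1, Complex.I} : Set ℂ)).prod
        (Submodule.span ℤ ({1, Complex.I} : Set ℂ)))
    (σ : (ℂ × ℂ) ≃ₗ[ℂ] (ℂ × ℂ))
    (hσ : ∀ z w : ℂ, σ (z, w) = (Complex.I * z, Complex.I * w)) :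
    PreservesLattice σ Λ ∧
    orderOf σ = 4 ∧
    ∀ (h : PreservesLattice σ Λ),
      orderOf (extSq σ Λ h) = 2 ∧
      ∃ vol : ⋀[ℤ]^4 ↥Λ, Submodule.span ℤ {vol} = ⊤ ∧
        ∀ b : ⋀[ℤ]^2 ↥Λ →ₗ[ℤ] ⋀[ℤ]^2 ↥Λ →ₗ[ℤ] ℤ, IsWedgeForm Λ vol b →
          HasGramMatrix b (invLat σ Λ h)
            !![0, 1, 0, 0; 1, 0, 0, 0; 0, 0, -2, 0; 0, 0, 0, -2] := by
  subst hΛ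
  have hσσ : ∀ x, σ (σ x) = -x := fun ⟨z, w⟩ => by simp [hσ, ← mul_assoc]
  refine ⟨preservesLattice_of_apply_apply_eq_neg hσσ fun ⟨z, w⟩ hx => ?_,
    orderOf_eq_four_of_apply_apply_eq_neg hσσ (x := (1, 0)) (by simp [neg_eq_self]), fun h => ?_⟩
  · rw [hσ]
    exact ⟨I_mul_mem_span_one_I hx.1, I_mul_mem_span_one_I hx.2⟩
  · set J := (latRestrict σ _ h).toLinearMap
    set b := gaussianProdBasis
    have hJ (x) : (J x : ℂ × ℂ) = σ x := rfl
    have hJJ (x) : J (J x) = -x := Subtype.ext (hσσ x)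
    have h0 : J (b 0) = b 1 := Subtype.ext (by simp [hJ, b, coe_gaussianProdBasis, hσ])
    have h2 : J (b 2) = b 3 := Subtype.ext (by simp [hJ, b, coe_gaussianProdBasis, hσ])
    exact ⟨orderOf_extPowMap_two h0 h2 hJJ, exteriorPower.ιMulti ℤ 4 b, span_ιMulti_eq_top b,
      fun B hB => hasGramMatrix_ker_extPowMap_two_sub_id h0 h2 hJJ hB⟩
end
end
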